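/- arXiv:2303.15367 — 3 statements merged into one kernel-verified Lean document; each statement's English description precedes it below -/
import Mathlib

section
/- Let G be a triangle-free graph of maximum degree at most Δ, let ε ∈ (0,1) be fixed with Δ sufficiently large in terms of ε, and let k satisfy (1-ε)·k·ln k ≥ Δ. Then for every vertex v of G, the number of proper k-colourings of G is at least Δ^{ε/2} times the number of proper k-colourings of G \ v. -/
/-!
The number of proper colourings of `G` is the sum, over the proper colourings of `G - v`, of the
number of colours unused on the neighbours of `v`, so let `σ` be a uniformly random proper colouring
of `G - v`. As `G` is triangle-free, these neighbours are independent in `G - v`, and their colours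
can be resampled independently, each from the list of colours not used around it. A colour is
avoided by a neighbour with list size `ℓ ≥ t` for sure if it is not in the list, and otherwise with
probability `1 - 1 / ℓ ≥ exp (-1 / (ℓ - 1))`; by convexity of `exp` the expected number of colours
missing from all the neighbours is at least about `k * exp (-Δ / k) ≥ k ^ ε`.

Neighbours with lists shorter than `t` are not resampled, and the colours they use are given up.
They are rare: by induction on the edges, the list of `u` in a random colouring of `G - v - u` has
mean size at least `L = Δ ^ (ε / 2)`, and in passing to `G - v` a list of size `ℓ` is reweighted by
`ℓ`, so a list shorter than `t` occurs with probability at most `t / L`.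
-/

namespace TriangleFreeColoring

open Finset Filter
open scoped BigOperators

section UnusedColors

variable {V α : Type*} [Fintype α]

open Classical in
/-- The colours that the colouring `σ` uses nowhere on `s`. With `s = G.neighborSet u` this is the
list of colours available at `u`. -/
noncomputable def unusedColors (σ : V → α) (s : Set V) : Finset α :=
  {c | ∀ u ∈ s, σ u ≠ c}

lemma mem_unusedColors {σ : V → α} {s : Set V} {c : α} :
    c ∈ unusedColors σ s ↔ ∀ u ∈ s, σ u ≠ c := by
  simp [unusedColors]

lemma dependsOn_unusedColors (s : Set V) :
    DependsOn (fun σ : V → α ↦ unusedColors σ s) s := by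
  intro σ τ hστ
  ext c
  simp only [mem_unusedColors]
  exact forall₂_congr fun u hu ↦ by rw [hστ u hu]

lemma unusedColors_update_of_notMem [DecidableEq V] {u : V} {s : Set V} (hu : u ∉ s)
    (σ : V → α) (c : α) : unusedColors (Function.update σ u c) s = unusedColors σ s :=
  dependsOn_unusedColors s fun _ hw ↦ Function.update_of_ne (ne_of_mem_of_not_mem hw hu) ..

lemma card_unusedColors_eq_sum_prod [DecidableEq α] (D : Finset V) (σ : V → α) :
    (#(unusedColors σ D) : ℝ) = ∑ c, ∏ u ∈ D, if σ u = c then 0 else 1 := by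
  have hprod (c : α) : (∏ u ∈ D, if σ u = c then (0 : ℝ) else 1)
      = if c ∈ unusedColors σ D then 1 else 0 := by
    simp only [mem_unusedColors, mem_coe, ← ite_not (σ _ = c), prod_ite_zero, prod_const_one]
  simp only [hprod, sum_boole, filter_univ_mem]

end UnusedColors

section ProperColorings

variable {V α : Type*} [Fintype V] [DecidableEq V] [Fintype α]

open Classical in
/-- The proper colourings of `G` with colours in `α`. They are plain functions, so that
`Function.update` applies to them; those of `G.deleteIncidenceSet v` stand for the colourings of
`G - v` together with an arbitrary colour at `v`. -/
noncomputable def properColorings (G : SimpleGraph V) (α : Type*) [Fintype α] : Finset (V → α) :=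
  {σ | ∀ u w, G.Adj u w → σ u ≠ σ w}

lemma mem_properColorings {G : SimpleGraph V} {σ : V → α} :
    σ ∈ properColorings G α ↔ ∀ u w, G.Adj u w → σ u ≠ σ w := by
  simp [properColorings]

lemma update_mem_properColorings_iff {G : SimpleGraph V} {u : V} {σ : V → α} {c : α} :
    Function.update σ u c ∈ properColorings G α ↔
      σ ∈ properColorings (G.deleteIncidenceSet u) α ∧ c ∈ unusedColors σ (G.neighborSet u) := by
  simp only [mem_properColorings, mem_unusedColors, SimpleGraph.deleteIncidenceSet_adj,
    SimpleGraph.mem_neighborSet]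
  refine ⟨fun h ↦ ⟨fun a b ⟨hab, ha, hb⟩ ↦ ?_, fun w huw ↦ ?_⟩, fun ⟨hσ, hc⟩ a b hab ↦ ?_⟩
  · simpa only [Function.update_of_ne ha, Function.update_of_ne hb] using h a b hab
  · simpa only [Function.update_self, Function.update_of_ne huw.ne'] using (h u w huw).symm
  · rcases eq_or_ne a u with rfl | ha
    · simpa only [Function.update_self, Function.update_of_ne hab.ne'] using (hc b hab).symm
    · rcases eq_or_ne b u with rfl | hb
      · simpa only [Function.update_self, Function.update_of_ne ha] using hc a hab.symm
      · simpa only [Function.update_of_ne ha, Function.update_of_ne hb] using hσ a b ⟨hab, ha, hb⟩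

lemma card_mul_sum_properColorings (G : SimpleGraph V) (u : V) (f : (V → α) → ℝ) :
    Fintype.card α * ∑ σ ∈ properColorings G α, f σ =
      ∑ σ ∈ properColorings (G.deleteIncidenceSet u) α,
        ∑ c ∈ unusedColors σ (G.neighborSet u), f (Function.update σ u c) := by
  have hprod : Fintype.card α * ∑ σ ∈ properColorings G α, f σ =
      ∑ p ∈ properColorings G α ×ˢ (univ : Finset α), f p.1 := by
    simp [sum_product, mul_sum]
  rw [hprod, sum_sigma']
  refine sum_nbij' (fun p ↦ ⟨Function.update p.1 u p.2, p.1 u⟩)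
    (fun p ↦ (Function.update p.1 u p.2, p.1 u)) ?_ ?_ ?_ ?_ ?_
  · rintro ⟨σ, c⟩ hσ
    rw [mem_sigma, ← update_mem_properColorings_iff]
    simpa using hσ
  · rintro ⟨σ, c⟩ hσ
    simpa [update_mem_properColorings_iff] using hσ
  all_goals simp

lemma card_mul_card_properColorings (G : SimpleGraph V) (u : V) :
    (Fintype.card α : ℝ) * #(properColorings G α) =
      ∑ σ ∈ properColorings (G.deleteIncidenceSet u) α,
        (#(unusedColors σ (G.neighborSet u)) : ℝ) := by
  simpa using card_mul_sum_properColorings (α := α) G u (fun _ ↦ 1)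

lemma card_properColorings_deleteIncidenceSet (G : SimpleGraph V) (v : V) :
    #(properColorings (G.deleteIncidenceSet v) α) = Fintype.card α *
      Nat.card {σ : {u : V // u ≠ v} → α //
        ∀ a b : {u : V // u ≠ v}, G.Adj a.1 b.1 → σ a ≠ σ b} := by
  let IsProper (σ : {u : V // u ≠ v} → α) : Prop :=
    ∀ a b : {u : V // u ≠ v}, G.Adj a.1 b.1 → σ a ≠ σ b
  have e : {σ : V → α // ∀ u w, (G.deleteIncidenceSet v).Adj u w → σ u ≠ σ w} ≃
      {p : ({u : V // u ≠ v} → α) × α // IsProper p.1} :=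
    ((Equiv.funSplitAt v α).trans (Equiv.prodComm _ _)).subtypeEquiv fun σ ↦ by
      simp only [IsProper, SimpleGraph.deleteIncidenceSet_adj, Subtype.forall, Equiv.trans_apply,
        Equiv.funSplitAt_apply, Equiv.prodComm_apply, Prod.fst_swap]
      grind
  rw [← Nat.subtype_card _ fun σ ↦ mem_properColorings,
    Nat.card_congr (e.trans Equiv.prodSubtypeFstEquivSubtypeProd), Nat.card_prod,
    Nat.card_eq_fintype_card (α := α), mul_comm]

lemma card_filter_card_unusedColors_lt_le {G : SimpleGraph V} {u : V} {t L : ℝ} (ht : 0 ≤ t)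
    (hL : 0 < L) [Nonempty α]
    (hu : L * #(properColorings (G.deleteIncidenceSet u) α) ≤
      Fintype.card α * #(properColorings G α)) :
    (#{σ ∈ properColorings G α | (#(unusedColors σ (G.neighborSet u)) : ℝ) < t} : ℝ) ≤
      t / L * #(properColorings G α) := by
  set k : ℝ := (Fintype.card α : ℝ)
  have hk : 0 < k := by positivity
  set short := {σ ∈ properColorings G α | (#(unusedColors σ (G.neighborSet u)) : ℝ) < t}
  have hshort : k * #short ≤ t * #(properColorings (G.deleteIncidenceSet u) α) := by
    have hsum := card_mul_sum_properColorings (α := α) G u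
      fun σ ↦ if (#(unusedColors σ (G.neighborSet u)) : ℝ) < t then 1 else 0
    simp only [unusedColors_update_of_notMem (G.notMem_neighborSet_self), sum_const,
      sum_boole] at hsum
    rw [hsum, mul_comm t, ← nsmul_eq_mul]
    refine sum_le_card_nsmul _ _ _ fun σ _ ↦ ?_
    split_ifs with hσ
    · simpa using hσ.le
    · simpa using ht
  rw [div_mul_eq_mul_div, le_div_iff₀ hL]
  refine le_of_mul_le_mul_left ?_ hk
  calc k * (#short * L) = L * (k * #short) := by ring
    _ ≤ L * (t * #(properColorings (G.deleteIncidenceSet u) α)) := by gcongr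
    _ = t * (L * #(properColorings (G.deleteIncidenceSet u) α)) := by ring
    _ ≤ t * (k * #(properColorings G α)) := by gcongr
    _ = k * (t * #(properColorings G α)) := by ring

end ProperColorings

section Resampling

variable {V α : Type*} [DecidableEq V] [Fintype α]

/-- The mean of `f` when the colour of `u` in the proper colouring `σ` is replaced by a uniformly
random available one, provided that at least `t` colours are available; otherwise nothing is
resampled. -/
noncomputable def resample (G : SimpleGraph V) (t : ℝ) (u : V) (f : (V → α) → ℝ) (σ : V → α) : ℝ :=
  if t ≤ #(unusedColors σ (G.neighborSet u)) then
    𝔼 c ∈ unusedColors σ (G.neighborSet u), f (Function.update σ u c)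
  else f σ

lemma dependsOn_resample (G : SimpleGraph V) (t : ℝ) {u : V} {f : (V → α) → ℝ}
    (hf : DependsOn f {u}) : DependsOn (resample G t u f) (insert u (G.neighborSet u)) := by
  intro σ τ hστ
  have hlist : unusedColors σ (G.neighborSet u) = unusedColors τ (G.neighborSet u) :=
    dependsOn_unusedColors _ fun w hw ↦ hστ w (Set.mem_insert_of_mem u hw)
  have hupdate (c : α) : f (Function.update σ u c) = f (Function.update τ u c) :=
    hf fun x hx ↦ by rw [hx, Function.update_self, Function.update_self]
  have hfστ : f σ = f τ := hf fun x hx ↦ hστ x (Set.mem_insert_iff.2 (Or.inl hx))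
  simp only [resample, hlist, hupdate, hfστ]

variable [Fintype V] [Nonempty α]

lemma sum_mul_resample (G : SimpleGraph V) (t : ℝ) (u : V) (f : (V → α) → ℝ)
    {w : (V → α) → ℝ} (hw : DependsOn w {u}ᶜ) :
    ∑ σ ∈ properColorings G α, w σ * resample G t u f σ =
      ∑ σ ∈ properColorings G α, w σ * f σ := by
  have hk : (Fintype.card α : ℝ) ≠ 0 := by simp
  refine mul_left_cancel₀ hk ?_
  rw [card_mul_sum_properColorings G u, card_mul_sum_properColorings G u]
  refine sum_congr rfl fun σ _ ↦ ?_
  have hwσ (c : α) : w (Function.update σ u c) = w σ :=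
    hw fun x hx ↦ Function.update_of_ne hx ..
  simp only [hwσ, ← mul_sum, resample, unusedColors_update_of_notMem G.notMem_neighborSet_self,
    Function.update_idem]
  split_ifs
  · rw [sum_const, card_smul_expect]
  · rfl

lemma sum_mul_prod_resample {G : SimpleGraph V} {D : Finset V}
    (hD : G.IsIndepSet D) (t : ℝ) {f : V → (V → α) → ℝ} (hf : ∀ u, DependsOn (f u) {u})
    {w : (V → α) → ℝ} (hw : DependsOn w (D : Set V)ᶜ) :
    ∑ σ ∈ properColorings G α, w σ * ∏ u ∈ D, resample G t u (f u) σ =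
      ∑ σ ∈ properColorings G α, w σ * ∏ u ∈ D, f u σ := by
  induction D using Finset.induction_on generalizing w with
  | empty => rfl
  | insert u D huD ih =>
    have hDindep : G.IsIndepSet D := hD.mono (by simp)
    have hother : DependsOn (fun σ ↦ w σ * ∏ x ∈ D, resample G t x (f x) σ) {u}ᶜ := by
      intro σ τ hστ
      refine congr_arg₂ _ (hw fun y hy ↦ hστ y fun hyu ↦ hy (by simp_all))
        (prod_congr rfl fun x hx ↦ dependsOn_resample G t (hf x) fun y hy ↦ hστ y ?_)
      rintro rfl
      rcases hy with rfl | hxy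
      · exact huD hx
      · exact hD (by simp [hx]) (by simp) hxy.ne hxy
    have hwu : DependsOn (fun σ ↦ w σ * f u σ) (D : Set V)ᶜ := fun σ τ hστ ↦
      congr_arg₂ _ (hw fun y hy ↦ hστ y fun hyD ↦ hy (by simp_all))
        (hf u fun y hy ↦ hστ y (by simp_all))
    simp only [prod_insert huD]
    calc ∑ σ ∈ properColorings G α,
          w σ * (resample G t u (f u) σ * ∏ x ∈ D, resample G t x (f x) σ)
        = ∑ σ ∈ properColorings G α,
          w σ * (∏ x ∈ D, resample G t x (f x) σ) * resample G t u (f u) σ :=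
          sum_congr rfl fun _ _ ↦ by ring
      _ = ∑ σ ∈ properColorings G α, w σ * (∏ x ∈ D, resample G t x (f x) σ) * f u σ :=
          sum_mul_resample G t u (f u) hother
      _ = ∑ σ ∈ properColorings G α, w σ * f u σ * ∏ x ∈ D, resample G t x (f x) σ :=
          sum_congr rfl fun _ _ ↦ by ring
      _ = ∑ σ ∈ properColorings G α, w σ * f u σ * ∏ x ∈ D, f x σ := ih hDindep hwu
      _ = ∑ σ ∈ properColorings G α, w σ * (f u σ * ∏ x ∈ D, f x σ) :=
          sum_congr rfl fun _ _ ↦ mul_assoc ..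

lemma sum_card_unusedColors_eq_sum_prod_resample [DecidableEq α]
    {G : SimpleGraph V} {D : Finset V} (hD : G.IsIndepSet D) (t : ℝ) :
    ∑ σ ∈ properColorings G α, (#(unusedColors σ D) : ℝ) =
      ∑ σ ∈ properColorings G α, ∑ c, ∏ u ∈ D,
        resample G t u (fun τ ↦ if τ u = c then 0 else 1) σ := by
  simp only [card_unusedColors_eq_sum_prod]
  rw [sum_comm, sum_comm (s := properColorings G α)]
  refine sum_congr rfl fun c _ ↦ ?_
  simpa using (sum_mul_prod_resample hD t (f := fun u τ ↦ if τ u = c then 0 else 1)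
    (fun u σ τ hστ ↦ by simp only [hστ u rfl]) (w := 1) fun _ _ _ ↦ rfl).symm

end Resampling

section ExpectedUnusedColors

variable {V α : Type*}

lemma exp_neg_one_div_sub_one_le {x : ℝ} (hx : 1 < x) :
    Real.exp (-(1 / (x - 1))) ≤ 1 - 1 / x := by
  have hx' : 0 < x - 1 := sub_pos.2 hx
  have hexp : x / (x - 1) ≤ Real.exp (1 / (x - 1)) := by
    calc x / (x - 1) = 1 / (x - 1) + 1 := by field_simp; ring
      _ ≤ _ := Real.add_one_le_exp _
  rw [Real.exp_neg]
  calc (Real.exp (1 / (x - 1)))⁻¹ ≤ (x / (x - 1))⁻¹ := inv_anti₀ (by positivity) hexp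
    _ = 1 - 1 / x := by field_simp

lemma expect_ite_eq_zero_one [DecidableEq α] {A : Finset α} (hA : A.Nonempty) (c : α) :
    (𝔼 d ∈ A, if d = c then (0 : ℝ) else 1) = 1 - if c ∈ A then 1 / (#A : ℝ) else 0 := by
  have hite (d : α) : (if d = c then (0 : ℝ) else 1) = 1 - if d = c then 1 else 0 := by
    split_ifs <;> norm_num
  simp only [hite, expect_sub_distrib, expect_const hA]
  simp [expect_eq_sum_div_card, ite_div]

variable [Fintype α]

/-- The exponential rate at which resampling the colour of `u` hits `c`: the resampled colour
avoids `c` with probability at least `Real.exp (-colorLoss G t σ u c)`. -/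
noncomputable def colorLoss [DecidableEq α] (G : SimpleGraph V) (t : ℝ) (σ : V → α) (u : V)
    (c : α) : ℝ :=
  if t ≤ #(unusedColors σ (G.neighborSet u)) ∧ c ∈ unusedColors σ (G.neighborSet u) then
    1 / (#(unusedColors σ (G.neighborSet u)) - 1) else 0

lemma sum_colorLoss_le [DecidableEq α] (G : SimpleGraph V) {t : ℝ} (ht : 1 < t) (σ : V → α)
    (u : V) : ∑ c, colorLoss G t σ u c ≤ t / (t - 1) := by
  simp only [colorLoss]
  set ℓ : ℝ := (#(unusedColors σ (G.neighborSet u)) : ℝ)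
  by_cases hℓ : t ≤ ℓ
  · simp only [hℓ, true_and, sum_ite_mem, univ_inter, sum_const, nsmul_eq_mul]
    change ℓ * (1 / (ℓ - 1)) ≤ t / (t - 1)
    rw [mul_one_div, div_le_div_iff₀ (by linarith) (by linarith)]
    linarith
  · simp only [hℓ, false_and, if_false, sum_const_zero]
    exact div_nonneg (by linarith) (by linarith)

lemma colorLoss_nonneg [DecidableEq α] (G : SimpleGraph V) {t : ℝ} (ht : 1 < t) (σ : V → α)
    (u : V) (c : α) : 0 ≤ colorLoss G t σ u c := by
  unfold colorLoss
  split_ifs with h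
  · exact one_div_nonneg.2 (by linarith [h.1])
  · rfl

variable [DecidableEq V]

lemma exp_neg_colorLoss_le_resample [DecidableEq α] (G : SimpleGraph V) {t : ℝ} (ht : 1 < t)
    {σ : V → α} {u : V} {c : α}
    (hc : (#(unusedColors σ (G.neighborSet u)) : ℝ) < t → σ u ≠ c) :
    Real.exp (-colorLoss G t σ u c) ≤ resample G t u (fun τ ↦ if τ u = c then 0 else 1) σ := by
  unfold colorLoss resample
  by_cases hlong : t ≤ #(unusedColors σ (G.neighborSet u))
  · have hcard : (1 : ℝ) < #(unusedColors σ (G.neighborSet u)) := ht.trans_le hlong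
    have hne : (unusedColors σ (G.neighborSet u)).Nonempty :=
      card_pos.1 (by exact_mod_cast one_pos.trans hcard)
    simp only [hlong, true_and, if_true, Function.update_self, expect_ite_eq_zero_one hne]
    split_ifs
    · exact exp_neg_one_div_sub_one_le hcard
    · simp
  · simp [hlong, hc (not_le.1 hlong)]

lemma resample_nonneg (G : SimpleGraph V) (t : ℝ) (u : V) {f : (V → α) → ℝ} (hf : 0 ≤ f)
    (σ : V → α) : 0 ≤ resample G t u f σ := by
  unfold resample
  split_ifs
  · exact expect_nonneg fun c _ ↦ hf _
  · exact hf σ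

-- The tangent line of `exp` at `-m`; the bound is sharpest when `m` is the mean of `s`.
lemma exp_neg_mul_le_sum_exp_neg {ι : Type*} (K : Finset ι) (s : ι → ℝ) (m : ℝ) :
    Real.exp (-m) * (#K * (1 + m) - ∑ c ∈ K, s c) ≤ ∑ c ∈ K, Real.exp (-s c) := by
  calc Real.exp (-m) * (#K * (1 + m) - ∑ c ∈ K, s c)
      = ∑ c ∈ K, Real.exp (-m) * (m - s c + 1) := by
        rw [← mul_sum, sum_add_distrib, sum_sub_distrib, sum_const, sum_const]
        simp only [nsmul_eq_mul]
        ring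
    _ ≤ ∑ c ∈ K, Real.exp (-m) * Real.exp (m - s c) := by
        gcongr
        exact Real.add_one_le_exp _
    _ = ∑ c ∈ K, Real.exp (-s c) := by
        simp only [← Real.exp_add, neg_add_eq_sub, sub_sub_cancel_left]

/-- The vertices of `D` with fewer than `t` available colours. -/
noncomputable def shortListVertices (G : SimpleGraph V) (t : ℝ) (D : Finset V) (σ : V → α) :
    Finset V :=
  {u ∈ D | (#(unusedColors σ (G.neighborSet u)) : ℝ) < t}

lemma exp_neg_mul_le_sum_prod_resample [DecidableEq α] (G : SimpleGraph V) {t m : ℝ} (ht : 1 < t)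
    (hm : 0 ≤ m) (D : Finset V) (σ : V → α) :
    Real.exp (-m) * ((Fintype.card α - #(shortListVertices G t D σ)) * (1 + m)
        - #D * (t / (t - 1))) ≤
      ∑ c, ∏ u ∈ D, resample G t u (fun τ ↦ if τ u = c then 0 else 1) σ := by
  set spoiled := (shortListVertices G t D σ).image σ
  have hcard : (Fintype.card α : ℝ) - #(shortListVertices G t D σ) ≤ #spoiledᶜ := by
    rw [card_compl, Nat.cast_sub (card_le_univ _)]
    gcongr
    exact card_image_le
  have hloss : ∑ c ∈ spoiledᶜ, ∑ u ∈ D, colorLoss G t σ u c ≤ #D * (t / (t - 1)) := by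
    rw [sum_comm, ← nsmul_eq_mul]
    refine sum_le_card_nsmul _ _ _ fun u _ ↦ le_trans ?_ (sum_colorLoss_le G ht σ u)
    exact sum_le_univ_sum_of_nonneg fun c ↦ colorLoss_nonneg G ht σ u c
  have hprod : ∀ c ∈ spoiledᶜ, Real.exp (-∑ u ∈ D, colorLoss G t σ u c) ≤
      ∏ u ∈ D, resample G t u (fun τ ↦ if τ u = c then 0 else 1) σ := by
    intro c hc
    rw [← sum_neg_distrib, Real.exp_sum]
    refine prod_le_prod (fun _ _ ↦ (Real.exp_pos _).le) fun u hu ↦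
      exp_neg_colorLoss_le_resample G ht fun hshort hσu ↦ mem_compl.1 hc ?_
    exact mem_image.2 ⟨u, mem_filter.2 ⟨hu, hshort⟩, hσu⟩
  calc _ ≤ Real.exp (-m) *
        (#spoiledᶜ * (1 + m) - ∑ c ∈ spoiledᶜ, ∑ u ∈ D, colorLoss G t σ u c) := by gcongr
    _ ≤ ∑ c ∈ spoiledᶜ, Real.exp (-∑ u ∈ D, colorLoss G t σ u c) :=
        exp_neg_mul_le_sum_exp_neg _ _ m
    _ ≤ ∑ c ∈ spoiledᶜ, ∏ u ∈ D, resample G t u (fun τ ↦ if τ u = c then 0 else 1) σ :=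
        sum_le_sum hprod
    _ ≤ _ := sum_le_univ_sum_of_nonneg fun c ↦ prod_nonneg fun u _ ↦
        resample_nonneg G t u (fun τ ↦ by positivity) σ

variable [Fintype V] [Nonempty α] {t L : ℝ} {G : SimpleGraph V} {D : Finset V}

lemma sum_card_shortListVertices_le (ht : 0 ≤ t) (hL : 0 < L)
    (hdel : ∀ u ∈ D, L * #(properColorings (G.deleteIncidenceSet u) α) ≤
      Fintype.card α * #(properColorings G α)) :
    ∑ σ ∈ properColorings G α, (#(shortListVertices G t D σ) : ℝ) ≤
      #D * (t / L * #(properColorings G α)) := by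
  rw [← nsmul_eq_mul]
  calc ∑ σ ∈ properColorings G α, (#(shortListVertices G t D σ) : ℝ)
      = ∑ u ∈ D, (#{σ ∈ properColorings G α |
          (#(unusedColors σ (G.neighborSet u)) : ℝ) < t} : ℝ) := by
        exact_mod_cast sum_card_bipartiteAbove_eq_sum_card_bipartiteBelow
          fun (σ : V → α) u ↦ (#(unusedColors σ (G.neighborSet u)) : ℝ) < t
    _ ≤ _ := sum_le_card_nsmul _ _ _ fun u hu ↦
        card_filter_card_unusedColors_lt_le ht hL (hdel u hu)

lemma mul_card_properColorings_le_sum_card_unusedColors {Δ κ : ℝ} (ht : 1 < t) (hL : 0 < L)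
    (hκ : 0 < κ) (hκα : κ + Δ * (t / L) ≤ Fintype.card α) (hD : G.IsIndepSet D) (hDΔ : #D ≤ Δ)
    (hdel : ∀ u ∈ D, L * #(properColorings (G.deleteIncidenceSet u) α) ≤
      Fintype.card α * #(properColorings G α)) :
    κ * Real.exp (-(Δ * (t / (t - 1)) / κ)) * #(properColorings G α) ≤
      ∑ σ ∈ properColorings G α, (#(unusedColors σ D) : ℝ) := by
  classical
  set N : ℝ := (#(properColorings G α) : ℝ)
  set loss := Δ * (t / (t - 1))
  set m := loss / κ
  have ht' : 0 < t - 1 := sub_pos.2 ht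
  have hΔ : 0 ≤ Δ := (Nat.cast_nonneg _).trans hDΔ
  have hm : 0 ≤ m := by positivity
  have hκm : κ * m = loss := mul_div_cancel₀ loss hκ.ne'
  have hlong : κ * N ≤
      Fintype.card α * N - ∑ σ ∈ properColorings G α, (#(shortListVertices G t D σ) : ℝ) := by
    have hshort : ∑ σ ∈ properColorings G α, (#(shortListVertices G t D σ) : ℝ) ≤
        Δ * (t / L * N) :=
      (sum_card_shortListVertices_le (by linarith) hL hdel).trans (by gcongr)
    have hκαN : (κ + Δ * (t / L)) * N ≤ Fintype.card α * N := by gcongr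
    linarith
  have hloss : #D * (t / (t - 1)) ≤ loss := mul_le_mul_of_nonneg_right hDΔ (by positivity)
  calc κ * Real.exp (-m) * N = Real.exp (-m) * (κ * N * (1 + m) - loss * N) := by
        rw [← hκm]; ring
    _ ≤ Real.exp (-m) * ((Fintype.card α * N -
          ∑ σ ∈ properColorings G α, (#(shortListVertices G t D σ) : ℝ)) * (1 + m)
          - #D * (t / (t - 1)) * N) := by
        gcongr
    _ = ∑ σ ∈ properColorings G α, Real.exp (-m) *
          ((Fintype.card α - #(shortListVertices G t D σ)) * (1 + m) - #D * (t / (t - 1))) := by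
        rw [← mul_sum, sum_sub_distrib, ← sum_mul, sum_sub_distrib, sum_const, sum_const]
        simp only [nsmul_eq_mul]
        ring
    _ ≤ ∑ σ ∈ properColorings G α, ∑ c, ∏ u ∈ D,
          resample G t u (fun τ ↦ if τ u = c then 0 else 1) σ :=
        sum_le_sum fun σ _ ↦ exp_neg_mul_le_sum_prod_resample G ht hm D σ
    _ = _ := (sum_card_unusedColors_eq_sum_prod_resample hD t).symm

theorem mul_card_properColorings_deleteIncidenceSet_le {Δ κ : ℝ} (ht : 1 < t) (hL : 0 < L)
    (hκ : 0 < κ) (hκα : κ + Δ * (t / L) ≤ Fintype.card α)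
    (hLκ : L ≤ κ * Real.exp (-(Δ * (t / (t - 1)) / κ))) (hG : G.CliqueFree 3)
    (hΔ : ∀ v, (G.neighborSet v).ncard ≤ Δ) (v : V) :
    L * #(properColorings (G.deleteIncidenceSet v) α) ≤
      Fintype.card α * #(properColorings G α) := by
  induction G using WellFoundedLT.induction generalizing v with
  | ind G ih =>
    classical
    have hle : G.deleteIncidenceSet v ≤ G := G.deleteIncidenceSet_le v
    have hlt {u : V} (hu : G.Adj v u) : G.deleteIncidenceSet v < G :=
      hle.lt_of_not_ge fun hge ↦ (SimpleGraph.deleteIncidenceSet_adj.1 (hge hu)).2.1 rfl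
    have hindep : (G.deleteIncidenceSet v).IsIndepSet (G.neighborSet v).toFinset := by
      rw [Set.coe_toFinset]
      exact (SimpleGraph.isIndepSet_neighborSet_of_triangleFree G hG v).imp
        fun _ _ hab h ↦ hab (hle h)
    rw [card_mul_card_properColorings G v]
    calc _ ≤ κ * Real.exp (-(Δ * (t / (t - 1)) / κ)) *
          #(properColorings (G.deleteIncidenceSet v) α) := by gcongr
      _ ≤ _ := by
        rw [← Set.coe_toFinset (G.neighborSet v)]
        refine mul_card_properColorings_le_sum_card_unusedColors ht hL hκ hκα hindep ?_
          fun u hu ↦ ?_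
        · simpa only [Set.ncard_eq_toFinset_card'] using hΔ v
        · refine ih _ (hlt (Set.mem_toFinset.1 hu)) (hG.anti hle) (fun w ↦ ?_) u
          exact le_trans (by exact_mod_cast Set.ncard_le_ncard fun x hx ↦ hle hx) (hΔ w)

end ExpectedUnusedColors

section Estimates

lemma eventually_mul_rpow_le_rpow (C : ℝ) {a b : ℝ} (hab : a < b) :
    ∀ᶠ x : ℝ in atTop, C * x ^ a ≤ x ^ b := by
  filter_upwards [(tendsto_rpow_atTop (sub_pos.2 hab)).eventually_ge_atTop C, eventually_gt_atTop 0]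
    with x hC hx
  calc C * x ^ a ≤ x ^ (b - a) * x ^ a := by gcongr
    _ = x ^ b := by rw [← Real.rpow_add hx, sub_add_cancel]

lemma eventually_rpow_one_sub_le_of_le_mul_log {δ : ℝ} (hδ : 0 < δ) :
    ∀ᶠ x : ℝ in atTop, ∀ k : ℝ, 0 < k → x ≤ k * Real.log k → x ^ (1 - δ) ≤ k := by
  filter_upwards [(isLittleO_log_rpow_atTop hδ).bound one_pos, eventually_ge_atTop 1]
    with x hlog hx k hk hxk
  have hx0 : 0 < x := by linarith
  have hlogx : Real.log x ≤ x ^ δ := by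
    simpa [Real.norm_of_nonneg (Real.log_nonneg hx),
      Real.norm_of_nonneg (Real.rpow_nonneg hx0.le δ)] using hlog
  by_contra! hkx
  have hkx' : k ≤ x := hkx.le.trans (Real.rpow_le_self_of_one_le hx (by linarith))
  have hlogk : Real.log k ≤ x ^ δ := (Real.log_le_log hk hkx').trans hlogx
  have : x < x := calc
    x ≤ k * Real.log k := hxk
    _ ≤ k * x ^ δ := by gcongr
    _ < x ^ (1 - δ) * x ^ δ := by gcongr
    _ = x := by rw [← Real.rpow_add hx0, sub_add_cancel, Real.rpow_one]
  exact this.false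

lemma eventually_mul_div_rpow_le_mul_of_le_mul_log (C : ℝ) {a δ : ℝ} (ha : 0 < a) (hδ : 0 < δ) :
    ∀ᶠ x : ℝ in atTop, ∀ k : ℝ, 0 < k → x ≤ k * Real.log k → x * (C / x ^ a) ≤ δ * k := by
  filter_upwards [eventually_gt_atTop 0,
    eventually_rpow_one_sub_le_of_le_mul_log (half_pos ha),
    eventually_mul_rpow_le_rpow (C / δ) (show 1 - a < 1 - a / 2 by linarith)]
    with x hx hlower hgrowth k hk hxk
  calc x * (C / x ^ a) = δ * (C / δ * x ^ (1 - a)) := by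
        rw [Real.rpow_sub hx, Real.rpow_one]
        field_simp
    _ ≤ δ * k := by gcongr; exact hgrowth.trans (hlower k hk hxk)

lemma rpow_le_two_mul_mul_exp {ε Δ k : ℝ} (hε0 : 0 < ε) (hε1 : ε < 1) (hk : 1 ≤ k)
    (hΔk : Δ ≤ (1 - ε) * k * Real.log k) :
    k ^ (3 * ε / 4) ≤
      2 * ((1 - ε / 8) * k * Real.exp (-(Δ * (1 + ε / 8) / ((1 - ε / 8) * k)))) := by
  have hk0 : 0 < k := by linarith
  have hklog : 0 ≤ k * Real.log k := mul_nonneg hk0.le (Real.log_nonneg hk)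
  have hrate : Δ * (1 + ε / 8) / ((1 - ε / 8) * k) ≤ (1 - 3 * ε / 4) * Real.log k := by
    rw [div_le_iff₀ (by nlinarith)]
    calc Δ * (1 + ε / 8) ≤ (1 - ε) * k * Real.log k * (1 + ε / 8) := by gcongr
      _ = (1 - ε) * (1 + ε / 8) * (k * Real.log k) := by ring
      _ ≤ (1 - 3 * ε / 4) * (1 - ε / 8) * (k * Real.log k) := by
        refine mul_le_mul_of_nonneg_right ?_ hklog
        nlinarith
      _ = _ := by ring
  have hpow : k ^ (3 * ε / 4) = k * Real.exp (-((1 - 3 * ε / 4) * Real.log k)) := by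
    nth_rw 2 [← Real.exp_log hk0]
    rw [← Real.exp_add, Real.rpow_def_of_pos hk0]
    ring_nf
  calc k ^ (3 * ε / 4) ≤ k * Real.exp (-(Δ * (1 + ε / 8) / ((1 - ε / 8) * k))) := by
        rw [hpow]; gcongr
    _ ≤ (2 * (1 - ε / 8)) * (k * Real.exp (-(Δ * (1 + ε / 8) / ((1 - ε / 8) * k)))) :=
        le_mul_of_one_le_left (by positivity) (by linarith)
    _ = _ := by ring

lemma eventually_rpow_le_mul_exp {ε : ℝ} (hε0 : 0 < ε) (hε1 : ε < 1) :
    ∀ᶠ Δ : ℝ in atTop, ∀ k : ℝ, 0 < k → Δ ≤ (1 - ε) * k * Real.log k →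
      Δ ^ (ε / 2) ≤
        (1 - ε / 8) * k * Real.exp (-(Δ * (1 + ε / 8) / ((1 - ε / 8) * k))) := by
  filter_upwards [eventually_gt_atTop 0,
    eventually_rpow_one_sub_le_of_le_mul_log (show 0 < ε / 8 by positivity),
    eventually_mul_rpow_le_rpow 2 (show ε / 2 < (1 - ε / 8) * (3 * ε / 4) by nlinarith)]
    with Δ hΔ hlower hgrowth k hk hΔk
  have hlog : 0 < Real.log k :=
    (mul_pos_iff_of_pos_left (mul_pos (sub_pos.2 hε1) hk)).1 (hΔ.trans_le hΔk)
  have hk1 : 1 ≤ k := ((Real.log_pos_iff hk.le).1 hlog).le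
  have hΔk' : Δ ^ (1 - ε / 8) ≤ k :=
    hlower k hk (hΔk.trans (by nlinarith [mul_pos hε0 (mul_pos hk hlog)]))
  have : 2 * Δ ^ (ε / 2) ≤ k ^ (3 * ε / 4) := by
    calc 2 * Δ ^ (ε / 2) ≤ (Δ ^ (1 - ε / 8)) ^ (3 * ε / 4) := by
          rwa [← Real.rpow_mul hΔ.le]
      _ ≤ k ^ (3 * ε / 4) := by gcongr
  linarith [rpow_le_two_mul_mul_exp hε0 hε1 hk1 hΔk]

end Estimates

end TriangleFreeColoring

theorem stmt_5 (ε : ℝ) (hε0 : 0 < ε) (hε1 : ε < 1) :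
    ∃ Δ₀ : ℕ, ∀ Δ : ℕ, Δ₀ ≤ Δ → ∀ k : ℕ, (Δ : ℝ) ≤ (1 - ε) * k * Real.log k →
    ∀ (V : Type) [Fintype V] [DecidableEq V] (G : SimpleGraph V) [DecidableRel G.Adj],
      G.CliqueFree 3 → G.maxDegree ≤ Δ → ∀ v : V,
      (Δ : ℝ) ^ (ε / 2) *
          (Nat.card {σ : {u : V // u ≠ v} → Fin k //
              ∀ a b : {u : V // u ≠ v}, G.Adj a.1 b.1 → σ a ≠ σ b} : ℝ) ≤
        (Nat.card {σ : V → Fin k // ∀ u w : V, G.Adj u w → σ u ≠ σ w} : ℝ) := by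
  open TriangleFreeColoring Filter in
  obtain ⟨Δ₀, hΔ₀⟩ := eventually_atTop.1 <| tendsto_natCast_atTop_atTop.eventually <|
    (eventually_gt_atTop (0 : ℝ)).and <| (eventually_rpow_le_mul_exp hε0 hε1).and <|
    eventually_mul_div_rpow_le_mul_of_le_mul_log (1 + 8 / ε) (half_pos hε0) (δ := ε / 8)
      (by positivity)
  refine ⟨Δ₀, fun Δ hΔ k hk V _ _ G _ hG hdeg v ↦ ?_⟩
  obtain ⟨hΔpos, hgrowth, hspoiled⟩ := hΔ₀ Δ hΔ
  have hΔk : (Δ : ℝ) ≤ k * Real.log k :=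
    hk.trans (by nlinarith [mul_nonneg k.cast_nonneg (Real.log_natCast_nonneg k)])
  have hk0 : 0 < (k : ℝ) := by
    refine lt_of_le_of_ne k.cast_nonneg fun h ↦ ?_
    simp only [← h, zero_mul] at hΔk
    linarith
  have : NeZero k := ⟨by simpa using hk0.ne'⟩
  have hratio : (1 + 8 / ε) / (1 + 8 / ε - 1) = 1 + ε / 8 := by field_simp; ring
  have hneighbors (u : V) : ((G.neighborSet u).ncard : ℝ) ≤ Δ := by
    rw [Set.ncard_eq_toFinset_card']
    exact_mod_cast (G.degree_le_maxDegree u).trans hdeg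
  have hmul := mul_card_properColorings_deleteIncidenceSet_le (α := Fin k) (t := 1 + 8 / ε)
    (L := (Δ : ℝ) ^ (ε / 2)) (κ := (1 - ε / 8) * k) (by simpa) (by positivity) (by nlinarith)
    (by rw [Fintype.card_fin]; linarith [hspoiled k hk0 hΔk]) (hratio ▸ hgrowth k hk0 hk) hG
    hneighbors v
  rw [card_properColorings_deleteIncidenceSet, Fintype.card_fin, Nat.cast_mul,
    mul_left_comm] at hmul
  rw [Nat.subtype_card _ fun σ ↦ mem_properColorings]
  exact le_of_mul_le_mul_left hmul hk0
end

section
/- Let ε ∈ (0,1), Δ sufficiently large in terms of ε, and k with (1-ε)k ln k ≥ Δ. Let G be a triangle-free graph of maximum degree at most Δ, set ℓ = Δ^{ε/2}, and let I be an independent set in G. If 𝛔 is a uniformly random proper k-colouring of G, then for every 0 < p < 1 and every subset J ⊆ I, the probability that ℓ_𝛔(v) ≤ p·ℓ for all v ∈ J is at most p^{|J|}. -/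
/-!
Counting colourings in two ways gives the extension identity
`k · ∑_{σ ∈ 𝒞(G)} F σ = ∑_{σ ∈ 𝒞(G - v)} ℓ_σ(v) · F σ` for every `F` that ignores the colour of `v`.
If `ℓ · |𝒞(H - v)| ≤ k · |𝒞(H)|` for all subgraphs `H` of `G`, applying the identity to the
vertices of an independent set one after the other shows that short lists on it are dominated by
independent events.

That extension bound holds for triangle-free graphs by induction on the graph. In `G - v`, the
neighbourhood `T` of `v` is independent, so the lists at `T` do not depend on the colours in `T`.
By induction each list at `T` is short with small probability, so by Markov's inequality few lists
are short at least half of the time. In that case the colours of the vertices with long lists may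
be resampled independently from these lists, and by convexity of `exp` this leaves at least `2ℓ`
colours available at `v` on average.
-/

open Finset Real

section Averaging

variable {X Y ι α : Type*} [Fintype X] [Fintype Y]

lemma sum_sum_fst_of_involutive {e : X × Y → X × Y} (he : Function.Involutive e) (f : X → ℝ) :
    ∑ x, ∑ y, f (e (x, y)).1 = Fintype.card Y * ∑ x, f x := by
  calc ∑ x, ∑ y, f (e (x, y)).1
      = ∑ z, f (he.toPerm e z).1 := (Fintype.sum_prod_type' fun x y => f (e (x, y)).1).symm
    _ = ∑ z : X × Y, f z.1 := Equiv.sum_comp (he.toPerm e) fun z => f z.1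
    _ = Fintype.card Y * ∑ x, f x := by simp [Fintype.sum_prod_type, mul_sum]

lemma sum_le_sum_of_involutive {e : X × Y → X × Y} (he : Function.Involutive e) {f g : X → ℝ}
    (h : ∀ x, ∑ y, f (e (x, y)).1 ≤ ∑ y, g (e (x, y)).1) [Nonempty Y] :
    ∑ x, f x ≤ ∑ x, g x := by
  have hsum : Fintype.card Y * ∑ x, f x ≤ Fintype.card Y * ∑ x, g x := by
    rw [← sum_sum_fst_of_involutive he, ← sum_sum_fst_of_involutive he]
    exact sum_le_sum fun x _ => h x
  exact le_of_mul_le_mul_left hsum (by exact_mod_cast Fintype.card_pos)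

lemma involutive_piecewise_of_invariant [DecidableEq ι] {A : (ι → α) → Finset ι}
    (hA : ∀ σ τ, A ((A σ).piecewise τ σ) = A σ) :
    Function.Involutive fun x : (ι → α) × (ι → α) =>
      ((A x.1).piecewise x.2 x.1, (A x.1).piecewise x.1 x.2) := by
  rintro ⟨σ, τ⟩
  dsimp only
  rw [hA]
  refine Prod.ext ?_ ?_ <;> simp [piecewise_same]

lemma mul_exp_neg_le_sum_exp_neg {C : Finset ι} {y : ι → ℝ} {a c : ℝ} (ha : 0 ≤ a)
    (hc : c ≤ #C) (hy : ∑ i ∈ C, y i ≤ a * c) :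
    c * exp (-a) ≤ ∑ i ∈ C, exp (-y i) := by
  -- The tangent line of `exp` at `-a`.
  have tangent (i : ι) : exp (-a) * (1 + a - y i) ≤ exp (-y i) := by
    calc exp (-a) * (1 + a - y i) ≤ exp (-a) * exp (a - y i) := by
          gcongr
          linarith [add_one_le_exp (a - y i)]
      _ = exp (-y i) := by rw [← exp_add]; congr 1; ring
  calc c * exp (-a) ≤ exp (-a) * (#C * (1 + a) - ∑ i ∈ C, y i) := by
        rw [mul_comm]
        gcongr
        nlinarith
    _ = ∑ i ∈ C, exp (-a) * (1 + a - y i) := by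
        rw [← mul_sum, sum_sub_distrib, sum_const, nsmul_eq_mul]
    _ ≤ ∑ i ∈ C, exp (-y i) := sum_le_sum fun i _ => tangent i

lemma mul_exp_neg_div_le_sub_one {t n : ℝ} (ht : 0 < t) (hn : t + 1 ≤ n) :
    n * exp (-((1 + 1 / t) / n)) ≤ n - 1 := by
  have hn_pos : 0 < n := by linarith
  have hn_sub_pos : 0 < n - 1 := by linarith
  have hinv : 1 / (n - 1) ≤ (1 + 1 / t) / n := by
    have : 1 ≤ (n - 1) / t := by rw [le_div_iff₀ ht]; linarith
    rw [div_le_div_iff₀ hn_sub_pos hn_pos, add_mul, one_div_mul_eq_div]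
    linarith
  have hexp : n / (n - 1) ≤ exp ((1 + 1 / t) / n) := by
    have : n / (n - 1) = 1 / (n - 1) + 1 := by field_simp; ring
    linarith [add_one_le_exp ((1 + 1 / t) / n)]
  rw [exp_neg, ← div_eq_mul_inv, div_le_iff₀ (exp_pos _)]
  rw [div_le_iff₀ hn_sub_pos] at hexp
  linarith

lemma mem_piFinset_piecewise_univ [Fintype ι] [DecidableEq ι] [Fintype α] {A : Finset ι}
    {L : ι → Finset α} {τ : ι → α} :
    τ ∈ Fintype.piFinset (A.piecewise L fun _ => univ) ↔ ∀ i ∈ A, τ i ∈ L i := by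
  refine Fintype.mem_piFinset.trans (forall_congr' fun i => ?_)
  by_cases hi : i ∈ A <;> simp [hi]

variable [DecidableEq α] {A : Finset ι} {L : ι → Finset α} {t : ℕ}

lemma sum_sum_filter_mem_div_card_le (C : Finset α) {w : ℝ} (hw : 0 ≤ w) :
    ∑ c ∈ C, ∑ i ∈ A with c ∈ L i, w / #(L i) ≤ w * #A := by
  calc ∑ c ∈ C, ∑ i ∈ A with c ∈ L i, w / #(L i)
      = ∑ i ∈ A, ∑ c ∈ C with c ∈ L i, w / #(L i) := by
        simp only [sum_filter]
        exact sum_comm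
    _ ≤ ∑ _i ∈ A, w := by
        refine sum_le_sum fun i _ => ?_
        have : #{c ∈ C | c ∈ L i} ≤ #(L i) := card_le_card fun c hc => (mem_filter.1 hc).2
        rw [sum_const, nsmul_eq_mul, mul_div_assoc', mul_comm]
        exact div_le_of_le_mul₀ (by positivity) hw (by gcongr)
    _ = w * #A := by rw [sum_const, nsmul_eq_mul, mul_comm]

variable [Fintype ι] [DecidableEq ι]

lemma card_piFinset_mul_exp_neg_le (ht : 0 < t) (hL : ∀ i ∈ A, t < #(L i)) (c : α) :
    #(Fintype.piFinset L) * exp (-∑ i ∈ A with c ∈ L i, (1 + 1 / (t : ℝ)) / #(L i))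
      ≤ #{τ ∈ Fintype.piFinset L | ∀ i ∈ A, τ i ≠ c} := by
  have avoiding : {τ ∈ Fintype.piFinset L | ∀ i ∈ A, τ i ≠ c}
      = Fintype.piFinset (A.piecewise (fun i => (L i).erase c) L) := by
    ext τ
    simp only [mem_filter, Fintype.mem_piFinset, ← forall_and]
    refine forall_congr' fun i => ?_
    by_cases hi : i ∈ A <;> simp [hi, and_comm]
  have filter_eq : {i ∈ A | c ∈ L i} = ({i | i ∈ A ∧ c ∈ L i} : Finset ι) := by ext i; simp
  rw [avoiding, Fintype.card_piFinset, Fintype.card_piFinset, Nat.cast_prod, Nat.cast_prod,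
    filter_eq, sum_filter, ← sum_neg_distrib, exp_sum, ← prod_mul_distrib]
  refine prod_le_prod (fun _ _ => by positivity) fun i _ => ?_
  by_cases hi : i ∈ A
  · by_cases hc : c ∈ L i
    · have := mul_exp_neg_div_le_sub_one (t := t) (n := #(L i)) (by exact_mod_cast ht)
        (by exact_mod_cast hL i hi)
      simpa [hi, hc, Nat.cast_sub (card_pos.2 ⟨c, hc⟩ : 1 ≤ #(L i))] using this
    · simp [hi, hc]
  · simp [hi]

-- A random `τ` avoids `x` on `A` with probability at least `exp (-(1 + 1 / t) * μ)`, where `μ` is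
-- the expected number of `i ∈ A` with `τ i = x`; over all `x`, the values `μ` sum to at most `#A`.
lemma mul_card_piFinset_le_sum_card_filter {C : Finset α} {a c : ℝ} (ht : 0 < t)
    (hL : ∀ i ∈ A, t < #(L i)) (ha : 0 ≤ a) (hc : c ≤ #C)
    (hA : (1 + 1 / (t : ℝ)) * #A ≤ a * c) :
    c * exp (-a) * #(Fintype.piFinset L)
      ≤ ∑ τ ∈ Fintype.piFinset L, (#{x ∈ C | ∀ i ∈ A, τ i ≠ x} : ℝ) := by
  let y (x : α) : ℝ := ∑ i ∈ A with x ∈ L i, (1 + 1 / (t : ℝ)) / #(L i)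
  have hy : ∑ x ∈ C, y x ≤ a * c :=
    (sum_sum_filter_mem_div_card_le C (by positivity)).trans hA
  calc c * exp (-a) * #(Fintype.piFinset L) ≤ (∑ x ∈ C, exp (-y x)) * #(Fintype.piFinset L) := by
        gcongr
        exact mul_exp_neg_le_sum_exp_neg ha hc hy
    _ = ∑ x ∈ C, #(Fintype.piFinset L) * exp (-y x) := by simp only [sum_mul, mul_comm]
    _ ≤ ∑ x ∈ C, (#{τ ∈ Fintype.piFinset L | ∀ i ∈ A, τ i ≠ x} : ℝ) :=
        sum_le_sum fun x _ => card_piFinset_mul_exp_neg_le ht hL x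
    _ = ∑ τ ∈ Fintype.piFinset L, (#{x ∈ C | ∀ i ∈ A, τ i ≠ x} : ℝ) := by
        exact_mod_cast (sum_card_bipartiteAbove_eq_sum_card_bipartiteBelow
          fun (τ : ι → α) (x : α) => ∀ i ∈ A, τ i ≠ x).symm

end Averaging

section Colorings

variable {V α : Type*} [Fintype V] [Fintype α] [DecidableEq α]

/-- The list of `v` under `σ`: the colours not used on the neighbours of `v`. Its size is the
`ℓ_σ(v)` of the paper. -/
def availableColors (G : SimpleGraph V) [DecidableRel G.Adj] (σ : V → α) (v : V) : Finset α :=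
  ((G.neighborFinset v).image σ)ᶜ

/-- The vertices of `T` whose list under `σ` has at most `t` colours. -/
def shortListVertices (G : SimpleGraph V) [DecidableRel G.Adj] (T : Finset V) (t : ℕ)
    (σ : V → α) : Finset V :=
  {u ∈ T | #(availableColors G σ u) ≤ t}

variable {G : SimpleGraph V} [DecidableRel G.Adj] {σ τ : V → α} {u v : V} {A T J : Finset V}
  {t : ℕ}

lemma mem_availableColors {c : α} : c ∈ availableColors G σ v ↔ ∀ u, G.Adj u v → σ u ≠ c := by
  simp [availableColors, G.adj_comm v]

lemma availableColors_eq_filter :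
    availableColors G σ v = ({c | ∀ u, G.Adj u v → σ u ≠ c} : Finset α) := by
  ext c
  simp [mem_availableColors]

lemma availableColors_congr (h : ∀ u, G.Adj u v → σ u = τ u) :
    availableColors G σ v = availableColors G τ v := by
  ext c
  simp only [mem_availableColors]
  exact forall₂_congr fun u hu => by rw [h u hu]

lemma shortListVertices_subset : shortListVertices G T t σ ⊆ T := filter_subset _ _

variable [DecidableEq V]

lemma availableColors_piecewise (hT : G.IsIndepSet T) (hAT : A ⊆ T) (hv : v ∈ T) :
    availableColors G (A.piecewise τ σ) v = availableColors G σ v :=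
  availableColors_congr fun _ huv =>
    piecewise_eq_of_notMem _ _ _ fun hu => hT (hAT hu) hv huv.ne huv

lemma availableColors_deleteIncidenceSet (huv : u ≠ v) (hadj : ¬ G.Adj u v) :
    availableColors (G.deleteIncidenceSet v) σ u = availableColors G σ u := by
  ext c
  simp only [mem_availableColors, SimpleGraph.deleteIncidenceSet_adj]
  refine forall_congr' fun w => ?_
  have : G.Adj w u → w ≠ v := fun hwu hwv => hadj (hwv ▸ hwu.symm)
  tauto

lemma shortListVertices_piecewise (hT : G.IsIndepSet T) (hAT : A ⊆ T) :
    shortListVertices G T t (A.piecewise τ σ) = shortListVertices G T t σ :=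
  filter_congr fun _ hu => by rw [availableColors_piecewise hT hAT hu]

/-- The proper colourings of `G` with palette `α`. A vertex `v` is deleted from `G` by passing to
`G.deleteIncidenceSet v`, which keeps `v` as an isolated vertex; hence
`#(properColorings (G.deleteIncidenceSet v) α)` is `Fintype.card α` times the number of proper
colourings of the graph without `v`. -/
def properColorings (G : SimpleGraph V) [DecidableRel G.Adj] (α : Type*) [Fintype α]
    [DecidableEq α] : Finset (V → α) :=
  {σ | ∀ u w, G.Adj u w → σ u ≠ σ w}

lemma mem_properColorings : σ ∈ properColorings G α ↔ ∀ u w, G.Adj u w → σ u ≠ σ w := by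
  simp [properColorings]

lemma piecewise_mem_properColorings (hA : G.IsIndepSet A) :
    A.piecewise τ σ ∈ properColorings G α ↔
      (∀ u ∉ A, ∀ w ∉ A, G.Adj u w → σ u ≠ σ w) ∧ ∀ u ∈ A, τ u ∈ availableColors G σ u := by
  have outside {u w : V} (hu : u ∈ A) (huw : G.Adj u w) : w ∉ A :=
    fun hw => hA hu hw huw.ne huw
  simp only [mem_properColorings, mem_availableColors]
  constructor
  · refine fun h => ⟨fun u hu w hw huw => ?_, fun u hu w hwu => ?_⟩
    · simpa [hu, hw] using h u w huw
    · simpa [hu, outside hu hwu.symm] using h w u hwu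
  · rintro ⟨h_out, h_in⟩ u w huw
    by_cases hu : u ∈ A
    · simpa [hu, outside hu huw] using (h_in u hu w huw.symm).symm
    · by_cases hw : w ∈ A
      · simpa [hu, hw] using h_in w hw u huw
      · simpa [hu, hw] using h_out u hu w hw huw

lemma update_mem_properColorings {c : α} :
    Function.update σ v c ∈ properColorings G α ↔
      σ ∈ properColorings (G.deleteIncidenceSet v) α ∧ c ∈ availableColors G σ v := by
  have hv : G.IsIndepSet ({v} : Finset V) := by simp
  have := piecewise_mem_properColorings (σ := σ) (τ := fun _ => c) hv
  simp only [piecewise_singleton, mem_singleton, forall_eq] at this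
  rw [this, mem_properColorings]
  simp only [SimpleGraph.deleteIncidenceSet_adj]
  grind

lemma card_mul_sum_properColorings (F : (V → α) → ℝ)
    (hF : ∀ σ c, F (Function.update σ v c) = F σ) :
    Fintype.card α * ∑ σ ∈ properColorings G α, F σ
      = ∑ σ ∈ properColorings (G.deleteIncidenceSet v) α, #(availableColors G σ v) * F σ := by
  have swap : Function.Involutive fun x : (V → α) × α => (Function.update x.1 v x.2, x.1 v) :=
    fun _ => by simp
  calc Fintype.card α * ∑ σ ∈ properColorings G α, F σ
      = Fintype.card α * ∑ σ, if σ ∈ properColorings G α then F σ else 0 := by simp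
    _ = ∑ σ, ∑ c, if Function.update σ v c ∈ properColorings G α then
          F (Function.update σ v c) else 0 := (sum_sum_fst_of_involutive swap _).symm
    _ = ∑ σ, if σ ∈ properColorings (G.deleteIncidenceSet v) α then
          #(availableColors G σ v) * F σ else 0 := by
        refine sum_congr rfl fun σ _ => ?_
        by_cases hσ : σ ∈ properColorings (G.deleteIncidenceSet v) α <;>
          simp [update_mem_properColorings, hF, hσ]
    _ = _ := by simp

lemma card_mul_card_filter_available_le {x : ℝ} (hx : 0 ≤ x) (P : (V → α) → Prop)
    [DecidablePred P] (hP : ∀ σ c, P (Function.update σ v c) ↔ P σ) :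
    Fintype.card α * (#{σ ∈ properColorings G α | #(availableColors G σ v) ≤ x ∧ P σ} : ℝ)
      ≤ x * #{σ ∈ properColorings (G.deleteIncidenceSet v) α | P σ} := by
  have list_update (σ : V → α) (c : α) :
      availableColors G (Function.update σ v c) v = availableColors G σ v :=
    availableColors_congr fun u huv => Function.update_of_ne huv.ne c σ
  have identity := card_mul_sum_properColorings (G := G) (v := v)
    (fun σ : V → α => if #(availableColors G σ v) ≤ x ∧ P σ then 1 else 0)
    fun σ c => by simp only [list_update, hP]
  rw [natCast_card_filter, natCast_card_filter, identity, mul_sum]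
  refine sum_le_sum fun σ _ => ?_
  by_cases hσ : P σ <;> by_cases hle : #(availableColors G σ v) ≤ x <;> simp [hσ, hle, hx]

lemma card_mul_card_filter_insert_le {x : V → ℝ} (hx : 0 ≤ x v) (hvJ : v ∉ J)
    (hJ : G.IsIndepSet (insert v J : Finset V)) :
    Fintype.card α *
        (#{σ ∈ properColorings G α | ∀ w ∈ insert v J, #(availableColors G σ w) ≤ x w} : ℝ)
      ≤ x v * #{σ ∈ properColorings (G.deleteIncidenceSet v) α |
          ∀ w ∈ J, #(availableColors (G.deleteIncidenceSet v) σ w) ≤ x w} := by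
  have ne_of_mem {w : V} (hw : w ∈ J) : w ≠ v := fun h => hvJ (h ▸ hw)
  have not_adj {w : V} (hw : w ∈ J) : ¬ G.Adj w v :=
    hJ (mem_insert_of_mem hw) (mem_insert_self v J) (ne_of_mem hw)
  have list_deleted (σ : V → α) {w : V} (hw : w ∈ J) :
      availableColors (G.deleteIncidenceSet v) σ w = availableColors G σ w :=
    availableColors_deleteIncidenceSet (ne_of_mem hw) (not_adj hw)
  have list_update (σ : V → α) (c : α) {w : V} (hw : w ∈ J) :
      availableColors G (Function.update σ v c) w = availableColors G σ w :=
    availableColors_congr fun u huw =>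
      Function.update_of_ne (fun huv : u = v => not_adj hw (huv ▸ huw.symm)) c σ
  have list_at_v := card_mul_card_filter_available_le (G := G) hx
    (fun σ : V → α => ∀ w ∈ J, #(availableColors G σ w) ≤ x w)
    fun σ c => forall₂_congr fun w hw => by rw [list_update σ c hw]
  simp only [forall_mem_insert]
  rwa [filter_congr (s := properColorings (G.deleteIncidenceSet v) α) fun σ _ =>
    forall₂_congr fun w hw => by rw [list_deleted σ hw]]

theorem pow_card_mul_card_filter_available_le [Nonempty α] {ℓ : ℝ} (hℓ : 0 ≤ ℓ) {x : V → ℝ}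
    (hx : ∀ v ∈ J, 0 ≤ x v) (hJ : G.IsIndepSet J)
    (hext : ∀ (H : SimpleGraph V) [DecidableRel H.Adj], H ≤ G → ∀ v,
      ℓ * #(properColorings (H.deleteIncidenceSet v) α) ≤ Fintype.card α * #(properColorings H α)) :
    ℓ ^ #J * #{σ ∈ properColorings G α | ∀ v ∈ J, #(availableColors G σ v) ≤ x v}
      ≤ (∏ v ∈ J, x v) * #(properColorings G α) := by
  induction J using Finset.induction_on generalizing G with
  | empty => simp
  | insert v J hvJ ih =>
    have hx_v : 0 ≤ x v := hx v (mem_insert_self v J)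
    have hx_J : ∀ w ∈ J, 0 ≤ x w := fun w hw => hx w (mem_insert_of_mem hw)
    have deleted := G.deleteIncidenceSet_le v
    have ih_deleted := ih (G := G.deleteIncidenceSet v) hx_J
      (fun a ha b hb hab h =>
        hJ (mem_insert_of_mem ha) (mem_insert_of_mem hb) hab (deleted h))
      fun H _ hH => hext H (hH.trans deleted)
    have list_at_v := card_mul_card_filter_insert_le (α := α) hx_v hvJ hJ
    have hprod : 0 ≤ ∏ w ∈ J, x w := prod_nonneg hx_J
    have hk : (0 : ℝ) < Fintype.card α := by exact_mod_cast Fintype.card_pos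
    rw [card_insert_of_notMem hvJ, prod_insert hvJ]
    refine le_of_mul_le_mul_left ?_ hk
    calc _ = ℓ ^ (#J + 1) * (Fintype.card α * (#{σ ∈ properColorings G α |
            ∀ w ∈ insert v J, #(availableColors G σ w) ≤ x w} : ℝ)) := by ring
      _ ≤ ℓ ^ (#J + 1) * (x v * #{σ ∈ properColorings (G.deleteIncidenceSet v) α |
            ∀ w ∈ J, #(availableColors (G.deleteIncidenceSet v) σ w) ≤ x w}) := by gcongr
      _ = ℓ * x v * (ℓ ^ #J * #{σ ∈ properColorings (G.deleteIncidenceSet v) α |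
            ∀ w ∈ J, #(availableColors (G.deleteIncidenceSet v) σ w) ≤ x w}) := by ring
      _ ≤ ℓ * x v * ((∏ w ∈ J, x w) * #(properColorings (G.deleteIncidenceSet v) α)) := by gcongr
      _ = x v * (∏ w ∈ J, x w) * (ℓ * #(properColorings (G.deleteIncidenceSet v) α)) := by ring
      _ ≤ x v * (∏ w ∈ J, x w) * (Fintype.card α * #(properColorings G α)) :=
          mul_le_mul_of_nonneg_left (hext G le_rfl v) (mul_nonneg hx_v hprod)
      _ = _ := by ring

lemma card_properColorings_le_two_mul {ℓ s : ℝ} (hℓ : 0 < ℓ) (hs : 0 < s)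
    (hT : 2 * #T * t ≤ ℓ * s)
    (hshort : ∀ u ∈ T, ℓ * #{σ ∈ properColorings G α | #(availableColors G σ u) ≤ t}
      ≤ t * #(properColorings G α)) :
    (#(properColorings G α) : ℝ)
      ≤ 2 * #{σ ∈ properColorings G α | #(shortListVertices G T t σ) ≤ s} := by
  set C := properColorings G α
  have double_count : ∑ σ ∈ C, (#(shortListVertices G T t σ) : ℝ)
      = ∑ u ∈ T, (#{σ ∈ C | #(availableColors G σ u) ≤ t} : ℝ) := by
    exact_mod_cast sum_card_bipartiteAbove_eq_sum_card_bipartiteBelow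
      fun σ u => #(availableColors G σ u) ≤ t
  have mean : ℓ * ∑ σ ∈ C, (#(shortListVertices G T t σ) : ℝ) ≤ ℓ * (s / 2 * #C) := by
    calc ℓ * ∑ σ ∈ C, (#(shortListVertices G T t σ) : ℝ)
        ≤ ∑ _u ∈ T, t * (#C : ℝ) := by
          rw [double_count, mul_sum]
          exact sum_le_sum hshort
      _ = 2 * #T * t * (#C / 2) := by rw [sum_const, nsmul_eq_mul]; ring
      _ ≤ ℓ * s * (#C / 2) := by gcongr
      _ = ℓ * (s / 2 * #C) := by ring
  have markov : #{σ ∈ C | ¬ #(shortListVertices G T t σ) ≤ s} * s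
      ≤ ∑ σ ∈ C, (#(shortListVertices G T t σ) : ℝ) := by
    rw [← nsmul_eq_mul]
    refine (card_nsmul_le_sum _ _ _ fun σ hσ => (not_le.1 (mem_filter.1 hσ).2).le).trans ?_
    exact sum_le_sum_of_subset_of_nonneg (filter_subset _ _) fun _ _ _ => by positivity
  have split : (#{σ ∈ C | #(shortListVertices G T t σ) ≤ s} : ℝ)
      + #{σ ∈ C | ¬ #(shortListVertices G T t σ) ≤ s} = #C := by
    exact_mod_cast card_filter_add_card_filter_not _
  have half : (#{σ ∈ C | ¬ #(shortListVertices G T t σ) ≤ s} : ℝ) ≤ #C / 2 :=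
    le_of_mul_le_mul_right (by linarith [le_of_mul_le_mul_left mean hℓ]) hs
  linarith

lemma compl_image_piecewise (hAT : A ⊆ T) :
    (T.image (A.piecewise τ σ))ᶜ = {c ∈ ((T \ A).image σ)ᶜ | ∀ u ∈ A, τ u ≠ c} := by
  ext c
  simp only [mem_compl, mem_image, mem_filter, mem_sdiff, not_exists, not_and]
  constructor
  · refine fun h => ⟨fun u hu => ?_, fun u hu => ?_⟩
    · simpa [hu.2] using h u hu.1
    · simpa [hu] using h u (hAT hu)
  · rintro ⟨h_out, h_in⟩ u hu
    by_cases huA : u ∈ A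
    · simpa [huA] using h_in u huA
    · simpa [huA] using h_out u ⟨hu, huA⟩

lemma card_sub_mul_exp_neg_mul_card_le_sum {a s : ℝ} (ht : 0 < t) (ha : 0 ≤ a)
    (hT : (1 + 1 / (t : ℝ)) * #T ≤ a * (Fintype.card α - s))
    (hσ : #(shortListVertices G T t σ) ≤ s) :
    let A := T \ shortListVertices G T t σ
    let N := Fintype.piFinset (A.piecewise (availableColors G σ) fun _ => univ)
    (Fintype.card α - s) * exp (-a) * #N ≤ ∑ τ ∈ N, (#(T.image (A.piecewise τ σ))ᶜ : ℝ) := by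
  intro A N
  have long_list : ∀ u ∈ A, t < #(A.piecewise (availableColors G σ) (fun _ => univ) u) := by
    intro u hu
    rw [piecewise_eq_of_mem _ _ _ hu]
    simpa [A, shortListVertices, (mem_sdiff.1 hu).1] using hu
  have unused : Fintype.card α - s ≤ #((T \ A).image σ)ᶜ := by
    have himage : (#((T \ A).image σ) : ℝ) ≤ s := by
      rw [Finset.sdiff_sdiff_eq_self shortListVertices_subset]
      exact le_trans (by exact_mod_cast card_image_le) hσ
    rw [card_compl, Nat.cast_sub (card_le_univ _)]
    linarith
  have colors_left (τ : V → α) : (T.image (A.piecewise τ σ))ᶜ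
      = {c ∈ ((T \ A).image σ)ᶜ | ∀ u ∈ A, τ u ≠ c} := compl_image_piecewise sdiff_subset
  simp only [colors_left]
  refine mul_card_piFinset_le_sum_card_filter ht long_list ha unused (le_trans ?_ hT)
  gcongr
  exact sdiff_subset

theorem card_sub_mul_exp_neg_mul_card_filter_le [Nonempty α] {a s : ℝ} (hT : G.IsIndepSet T)
    (ht : 0 < t) (ha : 0 ≤ a) (hTa : (1 + 1 / (t : ℝ)) * #T ≤ a * (Fintype.card α - s)) :
    (Fintype.card α - s) * exp (-a)
        * #{σ ∈ properColorings G α | #(shortListVertices G T t σ) ≤ s}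
      ≤ ∑ σ ∈ properColorings G α with #(shortListVertices G T t σ) ≤ s,
          (#(T.image σ)ᶜ : ℝ) := by
  let A (σ : V → α) : Finset V := T \ shortListVertices G T t σ
  have hAT (σ : V → α) : A σ ⊆ T := sdiff_subset
  have short_inv (σ τ : V → α) : shortListVertices G T t ((A σ).piecewise τ σ)
      = shortListVertices G T t σ := shortListVertices_piecewise hT (hAT σ)
  have resampling := involutive_piecewise_of_invariant (A := A) fun σ τ => by
    simp only [A, short_inv σ τ]
  set Q := {σ ∈ properColorings G α | #(shortListVertices G T t σ) ≤ s}
  let m := (Fintype.card α - s) * exp (-a)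
  suffices h : ∑ σ, (if σ ∈ Q then m else 0) ≤ ∑ σ, if σ ∈ Q then (#(T.image σ)ᶜ : ℝ) else 0 by
    simpa [m, mul_comm] using h
  refine sum_le_sum_of_involutive resampling fun σ => ?_
  have resampled_mem (τ : V → α) : (A σ).piecewise τ σ ∈ Q ↔
      ((∀ u ∉ A σ, ∀ w ∉ A σ, G.Adj u w → σ u ≠ σ w) ∧ #(shortListVertices G T t σ) ≤ s)
        ∧ τ ∈ Fintype.piFinset ((A σ).piecewise (availableColors G σ) fun _ => univ) := by
    rw [mem_filter, piecewise_mem_properColorings (hT.mono (hAT σ)), short_inv,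
      mem_piFinset_piecewise_univ]
    tauto
  simp only [resampled_mem]
  by_cases hσ : (∀ u ∉ A σ, ∀ w ∉ A σ, G.Adj u w → σ u ≠ σ w) ∧
      #(shortListVertices G T t σ) ≤ s
  · simp only [and_iff_right hσ, sum_ite_mem, univ_inter, sum_const, nsmul_eq_mul]
    rw [mul_comm]
    exact card_sub_mul_exp_neg_mul_card_le_sum ht ha hTa hσ.2
  · simp [hσ]

theorem mul_card_properColorings_deleteIncidenceSet_le [Nonempty α] {ℓ s a D : ℝ} (hℓ : 0 < ℓ)
    (hs : 0 < s) (ht : 0 < t) (ha : 0 ≤ a) (hD_short : 2 * D * t ≤ ℓ * s)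
    (hD_long : (1 + 1 / (t : ℝ)) * D ≤ a * (Fintype.card α - s))
    (hℓ_le : 2 * ℓ ≤ (Fintype.card α - s) * exp (-a))
    (G : SimpleGraph V) [DecidableRel G.Adj] (hG : G.CliqueFree 3) (hdeg : G.maxDegree ≤ D)
    (v : V) :
    ℓ * #(properColorings (G.deleteIncidenceSet v) α)
      ≤ Fintype.card α * #(properColorings G α) := by
  revert ‹DecidableRel G.Adj›
  induction G using WellFoundedLT.induction generalizing v with
  | ind G ih =>
  intro _ hdeg
  set H := G.deleteIncidenceSet v
  set T := G.neighborFinset v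
  have hHG : H ≤ G := G.deleteIncidenceSet_le v
  have hT : H.IsIndepSet T := fun u hu w hw huw h =>
    SimpleGraph.isIndepSet_neighborSet_of_triangleFree G hG v (by simpa [T] using hu)
      (by simpa [T] using hw) huw (hHG h)
  have hTD : (#T : ℝ) ≤ D := le_trans (by exact_mod_cast G.degree_le_maxDegree v) hdeg
  have short_at_neighbor : ∀ u ∈ T, ℓ * #{σ ∈ properColorings H α |
      #(availableColors H σ u) ≤ t} ≤ t * #(properColorings H α) := by
    intro u hu
    have hlt : H < G := lt_of_le_of_ne hHG fun h => by
      have huv : H.Adj v u := h ▸ (G.mem_neighborFinset v u).1 hu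
      exact (SimpleGraph.deleteIncidenceSet_adj.1 huv).2.1 rfl
    have := pow_card_mul_card_filter_available_le (α := α) (G := H) (J := {u})
      (x := fun _ => t) hℓ.le (fun _ _ => by positivity) (by simp)
      fun H' _ hH' w => ih H' (hH'.trans_lt hlt) (hG.anti (hH'.trans hHG)) w (le_trans (by
        exact_mod_cast SimpleGraph.maxDegree_mono (hH'.trans hHG)) hdeg)
    simpa using this
  have half : (#(properColorings H α) : ℝ)
      ≤ 2 * #{σ ∈ properColorings H α | #(shortListVertices H T t σ) ≤ s} :=
    card_properColorings_le_two_mul hℓ hs (le_trans (by gcongr) hD_short) short_at_neighbor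
  calc ℓ * #(properColorings H α)
      ≤ ℓ * (2 * #{σ ∈ properColorings H α | #(shortListVertices H T t σ) ≤ s}) := by gcongr
    _ = 2 * ℓ * #{σ ∈ properColorings H α | #(shortListVertices H T t σ) ≤ s} := by ring
    _ ≤ (Fintype.card α - s) * exp (-a)
          * #{σ ∈ properColorings H α | #(shortListVertices H T t σ) ≤ s} := by gcongr
    _ ≤ ∑ σ ∈ properColorings H α with #(shortListVertices H T t σ) ≤ s, (#(T.image σ)ᶜ : ℝ) :=
        card_sub_mul_exp_neg_mul_card_filter_le hT ht ha (le_trans (by gcongr) hD_long)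
    _ ≤ ∑ σ ∈ properColorings H α, (#(availableColors G σ v) : ℝ) :=
        sum_le_sum_of_subset_of_nonneg (filter_subset _ _) fun _ _ _ => by positivity
    _ = Fintype.card α * #(properColorings G α) := by
        simpa using (card_mul_sum_properColorings (G := G) (α := α) (v := v)
          (fun _ => 1) fun _ _ => rfl).symm

end Colorings

section Asymptotics

variable {ε Δ k t : ℝ}

lemma eventually_log_le_rpow {x : ℝ} (hx : 0 < x) : ∀ᶠ k : ℝ in Filter.atTop, log k ≤ k ^ x := by
  filter_upwards [(isLittleO_log_rpow_atTop hx).bound one_pos, Filter.eventually_ge_atTop 0]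
    with k hk hk_nonneg
  rw [one_mul, norm_of_nonneg (rpow_nonneg hk_nonneg x)] at hk
  exact (le_abs_self _).trans hk

lemma rpow_le_rpow_of_le_rpow {c x y : ℝ} (hΔ : 0 ≤ Δ) (hk : 1 ≤ k) (hΔk : Δ ≤ k ^ c)
    (hx : 0 ≤ x) (hxy : c * x ≤ y) : Δ ^ x ≤ k ^ y := by
  calc Δ ^ x ≤ (k ^ c) ^ x := by gcongr
    _ = k ^ (c * x) := (rpow_mul (by positivity) c x).symm
    _ ≤ k ^ y := rpow_le_rpow_of_exponent_le hk hxy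

lemma two_mul_mul_le_rpow_mul (hε0 : 0 < ε) (hε1 : ε < 1) (hΔ : 0 < Δ) (hk : 1 ≤ k)
    (hΔk : Δ ≤ k ^ (1 + ε / 4)) (ht : 16 * t / ε ≤ k ^ (ε / 4)) :
    2 * Δ * t ≤ Δ ^ (ε / 2) * (ε / 8 * k) := by
  have hk_pos : 0 < k := by linarith
  have ht' : 2 * t ≤ ε / 8 * k ^ (ε / 4) := by
    rw [div_le_iff₀ hε0] at ht
    linarith
  calc 2 * Δ * t = Δ ^ (ε / 2) * (Δ ^ (1 - ε / 2) * (2 * t)) := by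
        rw [← mul_assoc, ← rpow_add hΔ, add_sub_cancel, rpow_one]
        ring
    _ ≤ Δ ^ (ε / 2) * (k ^ (1 - ε / 4) * (ε / 8 * k ^ (ε / 4))) := by
        gcongr ?_ * ?_
        refine (mul_le_mul_of_nonneg_left ht' (by positivity)).trans ?_
        gcongr ?_ * _
        exact rpow_le_rpow_of_le_rpow hΔ.le hk hΔk (by linarith) (by nlinarith)
    _ = Δ ^ (ε / 2) * (ε / 8 * k) := by
        rw [mul_left_comm (k ^ _), ← rpow_add hk_pos, sub_add_cancel, rpow_one]

lemma one_add_one_div_mul_le_log_mul (hε0 : 0 < ε) (hε1 : ε < 1) (ht : 8 / ε ≤ t)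
    (hk : 1 ≤ k) (hΔ : Δ ≤ (1 - ε) * k * log k) :
    (1 + 1 / t) * Δ ≤ (1 - 3 * ε / 4) * log k * (k - ε / 8 * k) := by
  have ht_pos : 0 < t := lt_of_lt_of_le (by positivity) ht
  have ht_inv : 1 / t ≤ ε / 8 := by
    rw [div_le_iff₀ hε0] at ht
    rw [div_le_iff₀ ht_pos]
    linarith
  have hklog : 0 ≤ k * log k := mul_nonneg (by linarith) (log_nonneg hk)
  calc (1 + 1 / t) * Δ ≤ (1 + 1 / t) * ((1 - ε) * k * log k) := by gcongr
    _ = (1 + 1 / t) * (1 - ε) * (k * log k) := by ring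
    _ ≤ (1 - 3 * ε / 4) * (1 - ε / 8) * (k * log k) := by
        gcongr ?_ * _
        nlinarith
    _ = (1 - 3 * ε / 4) * log k * (k - ε / 8 * k) := by ring

lemma two_mul_rpow_le_mul_exp_neg_log (hε0 : 0 < ε) (hε1 : ε < 1) (hΔ : 0 ≤ Δ) (hk : 1 ≤ k)
    (hΔk : Δ ≤ k ^ (1 + ε / 4)) (hk_large : 16 / 7 ≤ k ^ (ε / 8)) :
    2 * Δ ^ (ε / 2) ≤ (k - ε / 8 * k) * exp (-((1 - 3 * ε / 4) * log k)) := by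
  have hk_pos : 0 < k := by linarith
  calc 2 * Δ ^ (ε / 2) ≤ 2 * k ^ (5 * ε / 8) := by
        gcongr
        exact rpow_le_rpow_of_le_rpow hΔ hk hΔk (by linarith) (by nlinarith)
    _ = 7 / 8 * (k ^ (5 * ε / 8) * (16 / 7)) := by ring
    _ ≤ 7 / 8 * (k ^ (5 * ε / 8) * k ^ (ε / 8)) := by gcongr
    _ = 7 / 8 * k * k ^ (-(1 - 3 * ε / 4)) := by
        rw [mul_assoc, ← rpow_add hk_pos, ← rpow_one_add' hk_pos.le (by linarith)]
        ring_nf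
    _ ≤ (k - ε / 8 * k) * k ^ (-(1 - 3 * ε / 4)) := by
        gcongr
        nlinarith
    _ = (k - ε / 8 * k) * exp (-((1 - 3 * ε / 4) * log k)) := by
        rw [rpow_def_of_pos hk_pos]
        ring_nf

lemma le_of_sq_lt_mul_log {K : ℝ} (hk : 0 ≤ k) (h : K ^ 2 < k * log k) : K ≤ k := by
  by_contra! hlt
  have : k * log k ≤ k * k := by gcongr; exact log_le_self hk
  nlinarith

end Asymptotics

theorem exists_forall_rpow_mul_card_properColorings_le {ε : ℝ} (hε0 : 0 < ε) (hε1 : ε < 1) :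
    ∃ Δ₀ : ℝ, 0 < Δ₀ ∧ ∀ Δ ≥ Δ₀, ∀ (α : Type*) [Fintype α] [DecidableEq α] [Nonempty α],
      Δ ≤ (1 - ε) * Fintype.card α * log (Fintype.card α) →
    ∀ (V : Type*) [Fintype V] [DecidableEq V] (G : SimpleGraph V) [DecidableRel G.Adj],
      G.CliqueFree 3 → G.maxDegree ≤ Δ → ∀ v,
      Δ ^ (ε / 2) * #(properColorings (G.deleteIncidenceSet v) α)
        ≤ Fintype.card α * #(properColorings G α) := by
  obtain ⟨t, ht⟩ := exists_nat_ge (8 / ε)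
  have ht_pos : (0 : ℝ) < t := lt_of_lt_of_le (by positivity) ht
  obtain ⟨K, hK⟩ := Filter.eventually_atTop.1 ((Filter.eventually_gt_atTop (1 : ℝ)).and <|
    (eventually_log_le_rpow (by positivity : 0 < ε / 4)).and <|
    ((tendsto_rpow_atTop (by positivity : 0 < ε / 4)).eventually_ge_atTop (16 * t / ε)).and <|
    (tendsto_rpow_atTop (by positivity : 0 < ε / 8)).eventually_ge_atTop (16 / 7))
  refine ⟨K ^ 2 + 1, by positivity, fun Δ hΔ α _ _ _ hΔα V _ _ G _ hG hdeg => ?_⟩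
  set k : ℝ := (Fintype.card α : ℝ)
  have hΔ_pos : 0 < Δ := lt_of_lt_of_le (by positivity) hΔ
  have hΔ_le : Δ ≤ k * log k := by
    have : 0 ≤ k * log k := mul_nonneg (by positivity) (log_natCast_nonneg _)
    nlinarith
  obtain ⟨hk, hlog, hkt, hk_large⟩ := hK k (le_of_sq_lt_mul_log (by positivity) (by linarith))
  have hk_pos : 0 < k := by linarith
  have hΔ_rpow : Δ ≤ k ^ (1 + ε / 4) := by
    rw [rpow_add hk_pos, rpow_one]
    exact hΔ_le.trans (by gcongr)
  -- Take `s = ε / 8 * k` and `a = (1 - 3 * ε / 4) * log k`: there is room for the degree since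
  -- `(1 + ε / 8) * (1 - ε) ≤ (1 - 3 * ε / 4) * (1 - ε / 8)`, and `k * exp (-a) = k ^ (3 * ε / 4)`
  -- exceeds `Δ ^ (ε / 2) ≤ k ^ (5 * ε / 8)`.
  exact mul_card_properColorings_deleteIncidenceSet_le (by positivity)
    (by positivity : 0 < ε / 8 * k) (by exact_mod_cast ht_pos)
    (mul_nonneg (by linarith) (log_nonneg hk.le))
    (two_mul_mul_le_rpow_mul hε0 hε1 hΔ_pos hk.le hΔ_rpow hkt)
    (one_add_one_div_mul_le_log_mul hε0 hε1 ht hk.le hΔα)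
    (two_mul_rpow_le_mul_exp_neg_log hε0 hε1 hΔ_pos.le hk.le hΔ_rpow hk_large) G hG hdeg

theorem stmt_10_general {ε : ℝ} (hε0 : 0 < ε) (hε1 : ε < 1) :
    ∃ Δ₀ : ℝ, ∀ Δ ≥ Δ₀, ∀ (α : Type*) [Fintype α] [DecidableEq α],
      Δ ≤ (1 - ε) * Fintype.card α * log (Fintype.card α) →
    ∀ (V : Type*) [Fintype V] [DecidableEq V] (G : SimpleGraph V) [DecidableRel G.Adj],
      G.CliqueFree 3 → G.maxDegree ≤ Δ →
    ∀ (p : V → ℝ) (J : Finset V), G.IsIndepSet J → (∀ v ∈ J, 0 ≤ p v) →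
      (#{σ ∈ properColorings G α | ∀ v ∈ J, #(availableColors G σ v) ≤ p v * Δ ^ (ε / 2)} : ℝ)
        / #(properColorings G α) ≤ ∏ v ∈ J, p v := by
  obtain ⟨Δ₀, hΔ₀, hext⟩ := exists_forall_rpow_mul_card_properColorings_le hε0 hε1
  refine ⟨Δ₀, fun Δ hΔ α _ _ hΔα V _ _ G _ hG hdeg p J hJ hp => ?_⟩
  have hΔ_pos : 0 < Δ := hΔ₀.trans_le hΔ
  have : Nonempty α := by
    by_contra h
    simp only [not_nonempty_iff] at h
    simp at hΔα
    linarith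
  have hℓ : 0 < Δ ^ (ε / 2) := by positivity
  have joint := pow_card_mul_card_filter_available_le (α := α) hℓ.le
    (x := fun v => p v * Δ ^ (ε / 2)) (fun v hv => mul_nonneg (hp v hv) hℓ.le) hJ
    fun H _ hH => hext Δ hΔ α hΔα V H (hG.anti hH)
      (le_trans (by exact_mod_cast SimpleGraph.maxDegree_mono hH) hdeg)
  refine div_le_of_le_mul₀ (by positivity) (prod_nonneg hp)
    (le_of_mul_le_mul_left (joint.trans_eq ?_) (pow_pos hℓ #J))
  rw [prod_mul_distrib, prod_const]
  ring

theorem stmt_10 (ε : ℝ) (hε0 : 0 < ε) (hε1 : ε < 1) :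
    ∃ Δ₀ : ℕ, ∀ Δ : ℕ, Δ₀ ≤ Δ → ∀ k : ℕ, (Δ : ℝ) ≤ (1 - ε) * k * Real.log k →
    ∀ (V : Type) [Fintype V] [DecidableEq V] (G : SimpleGraph V) [DecidableRel G.Adj],
      G.CliqueFree 3 → G.maxDegree ≤ Δ →
    ∀ I : Finset V, (∀ u ∈ I, ∀ w ∈ I, ¬ G.Adj u w) →
    ∀ p : ℝ, 0 < p → p < 1 → ∀ J : Finset V, J ⊆ I →
      ((Finset.univ.filter
            (fun σ : V → Fin k => (∀ u w : V, G.Adj u w → σ u ≠ σ w) ∧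
              ∀ v ∈ J, ((Finset.univ.filter
                (fun c : Fin k => ∀ u : V, G.Adj u v → σ u ≠ c)).card : ℝ) ≤
                  p * (Δ : ℝ) ^ (ε / 2))).card : ℝ) /
          ((Finset.univ.filter
            (fun σ : V → Fin k => ∀ u w : V, G.Adj u w → σ u ≠ σ w)).card : ℝ) ≤
        p ^ J.card := by
  obtain ⟨Δ₀, h⟩ := stmt_10_general hε0 hε1
  refine ⟨⌈Δ₀⌉₊, fun Δ hΔ k hk V _ _ G _ hG hdeg I hI p hp _ J hJI => ?_⟩
  have hJ : G.IsIndepSet J := fun u hu w hw _ => hI u (hJI hu) w (hJI hw)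
  simpa [properColorings, filter_filter, availableColors_eq_filter] using
    h Δ (Nat.ceil_le.1 hΔ) (Fin k) (by simpa using hk) V G hG (by exact_mod_cast hdeg)
      (fun _ => p) J hJ fun _ _ => hp.le
end

section
/- Let G be a triangle-free graph, v a vertex, and σ₀ a proper k-colouring of G \ N[v] admitting at least one extension to a proper k-colouring of G. Let 𝛔 be a uniformly random such extension, and ℓ = E[ℓ_𝛔(v)]. Then for all δ ∈ (0,1), P(ℓ_𝛔(v) ≤ (1-δ)·ℓ) ≤ exp(-δ²ℓ/2). -/
/-!
Let the neighbourhood of `v` be independent. A proper extension of `σ₀` is an independent choice of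
colours `ω` for the neighbours of `v`, each from its own list, together with a colour for `v` that
`ω` misses. So if `X` is the number of colours missed by a uniformly random `ω` and `m = 𝔼 X`, the
number of colours available at `v` in a random extension has the law of `X` *biased by its size*,
and `ℓ = 𝔼 X² / m ≥ m`. The events that a colour is missed are negatively correlated under the
uniform law of `ω`, though not in general under the biased one; this gives `ℓ ≤ m + 1` and
`𝔼 exp (-t X) ≤ exp (m (t² / 2 - t))`. With `b = δ ℓ`, the resulting Chernoff bound is strong enough
when `b² > 2 ℓ`.

Closer to the mean, Cantelli's inequality suffices once the size-biased variance is at most `ℓ`.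
Biasing by size amounts to drawing a colour `c` with probability proportional to the probability
`p c` that it is missed and conditioning on that event, i.e. deleting `c` from all lists. This
changes the mean of `X` from `m` to `ℓ c`, and the variance bound reduces to
`∑ c, p c * (m + 1 - ℓ c) ^ 2 ≤ m`. Here `m + 1 - ℓ c ≤ ∑ x, B c x * p x` for a symmetric matrix `B`
with `p c * ∑ x, B c x ≤ 1`, so the Cauchy–Schwarz inequality along the rows of `B` suffices.
-/

open Finset
open scoped BigOperators
open Fintype (card_piFinset mem_piFinset piFinset piFinset_nonempty)

section Inequalities

lemma one_add_sum_le_prod_one_add {ι R : Type*} [CommRing R] [LinearOrder R]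
    [IsStrictOrderedRing R] (s : Finset ι) {f : ι → R} (hf : ∀ i ∈ s, 0 ≤ f i) :
    1 + ∑ i ∈ s, f i ≤ ∏ i ∈ s, (1 + f i) := by
  induction s using Finset.cons_induction with
  | empty => simp
  | cons a s ha ih =>
    rw [forall_mem_cons] at hf
    rw [sum_cons, prod_cons]
    have hprod := mul_le_mul_of_nonneg_left (ih hf.2) (by linarith [hf.1] : 0 ≤ 1 + f a)
    nlinarith [mul_nonneg hf.1 (sum_nonneg hf.2)]

lemma one_sub_sum_le_prod_one_sub {ι R : Type*} [CommRing R] [LinearOrder R]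
    [IsStrictOrderedRing R] (s : Finset ι) {f : ι → R} (hf₀ : ∀ i ∈ s, 0 ≤ f i)
    (hf₁ : ∀ i ∈ s, f i ≤ 1) :
    1 - ∑ i ∈ s, f i ≤ ∏ i ∈ s, (1 - f i) := by
  induction s using Finset.cons_induction with
  | empty => simp
  | cons a s ha ih =>
    rw [forall_mem_cons] at hf₀ hf₁
    rw [sum_cons, prod_cons]
    have hprod := mul_le_mul_of_nonneg_left (ih hf₀.2 hf₁.2) (sub_nonneg.2 hf₁.1)
    nlinarith [mul_nonneg hf₀.1 (sum_nonneg hf₀.2)]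

lemma sum_mul_sq_sum_mul_le {ι : Type*} [Fintype ι] {p : ι → ℝ} {B : ι → ι → ℝ}
    (hp : ∀ i, 0 ≤ p i) (hB : ∀ i j, 0 ≤ B i j) (hsymm : ∀ i j, B i j = B j i)
    (hrow : ∀ i, p i * ∑ j, B i j ≤ 1) :
    ∑ i, p i * (∑ j, B i j * p j) ^ 2 ≤ ∑ i, p i := by
  have hcs (i : ι) : (∑ j, B i j * p j) ^ 2 ≤ (∑ j, B i j) * ∑ j, B i j * p j ^ 2 :=
    sum_sq_le_sum_mul_sum_of_sq_le_mul _ (fun j _ ↦ hB i j)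
      (fun j _ ↦ mul_nonneg (hB i j) (sq_nonneg _)) fun j _ ↦ (by ring : _ = _).le
  calc ∑ i, p i * (∑ j, B i j * p j) ^ 2
      ≤ ∑ i, ∑ j, B i j * p j ^ 2 := by
        refine sum_le_sum fun i _ ↦ (mul_le_mul_of_nonneg_left (hcs i) (hp i)).trans ?_
        rw [← mul_assoc]
        exact mul_le_of_le_one_left
          (sum_nonneg fun j _ ↦ mul_nonneg (hB i j) (sq_nonneg _)) (hrow i)
    _ = ∑ j, p j * (p j * ∑ i, B j i) := by
        rw [sum_comm]
        refine sum_congr rfl fun j _ ↦ ?_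
        rw [← sum_mul, sum_congr rfl fun i _ ↦ hsymm i j]
        ring
    _ ≤ ∑ j, p j := sum_le_sum fun j _ ↦ mul_le_of_le_one_right (hp j) (hrow j)

lemma one_sub_exp_neg_ge {t : ℝ} (ht : 0 ≤ t) : t - t ^ 2 / 2 ≤ 1 - Real.exp (-t) := by
  have hquad := Real.quadratic_le_exp_of_nonneg ht
  have hpos : 0 < 1 + t + t ^ 2 / 2 := by positivity
  have hinv : Real.exp (-t) ≤ (1 + t + t ^ 2 / 2)⁻¹ := by
    rw [Real.exp_neg]
    exact inv_anti₀ hpos hquad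
  have hinv' : (1 + t + t ^ 2 / 2)⁻¹ ≤ 1 - t + t ^ 2 / 2 := by
    rw [inv_le_iff_one_le_mul₀ hpos]
    nlinarith [sq_nonneg (t ^ 2)]
  linarith

lemma inv_one_add_two_mul_le_exp_neg {z : ℝ} (hz₀ : 0 ≤ z) (hz₁ : z ≤ 1) :
    (1 + 2 * z)⁻¹ ≤ Real.exp (-z) := by
  have hexp := (abs_le.1 (Real.abs_exp_sub_one_sub_id_le (abs_le.2 ⟨by linarith, hz₁⟩))).2
  rw [Real.exp_neg]
  exact inv_anti₀ (Real.exp_pos z) (by nlinarith)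

end Inequalities

section Tails

variable {ι : Type*} {s : Finset ι} {X : ι → ℝ}

lemma expect_sub_sq (hs : s.Nonempty) (X : ι → ℝ) (a : ℝ) :
    𝔼 i ∈ s, (X i - a) ^ 2 = 𝔼 i ∈ s, X i ^ 2 - 2 * a * 𝔼 i ∈ s, X i + a ^ 2 := by
  conv_rhs => rw [← expect_const hs (a ^ 2), mul_expect]
  rw [← expect_sub_distrib, ← expect_add_distrib]
  exact expect_congr rfl fun i _ ↦ by ring

lemma expect_mul_sub_sq_le {w : ι → ℝ} (hw : ∀ i ∈ s, 0 ≤ w i) {μ : ℝ}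
    (hmean : 𝔼 i ∈ s, w i * (X i - μ) = 0) (a : ℝ) :
    𝔼 i ∈ s, w i * (X i - μ) ^ 2 ≤ 𝔼 i ∈ s, w i * (X i - a) ^ 2 := by
  have hexpand : 𝔼 i ∈ s, w i * (X i - a) ^ 2
      = 𝔼 i ∈ s, w i * (X i - μ) ^ 2 + 2 * (μ - a) * 𝔼 i ∈ s, w i * (X i - μ)
        + (μ - a) ^ 2 * 𝔼 i ∈ s, w i := by
    simp only [mul_expect, ← expect_add_distrib]
    exact expect_congr rfl fun i _ ↦ by ring
  rw [hexpand, hmean, mul_zero, add_zero]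
  exact le_add_of_nonneg_right (mul_nonneg (sq_nonneg _) (expect_nonneg hw))

lemma expect_ite_le_of_variance_le {w : ι → ℝ} (hw : ∀ i ∈ s, 0 ≤ w i) {μ V b : ℝ}
    (hV : 0 < V) (hb : 0 ≤ b) (hmean : 𝔼 i ∈ s, w i * (X i - μ) = 0)
    (hvar : 𝔼 i ∈ s, w i * (X i - μ) ^ 2 ≤ (𝔼 i ∈ s, w i) * V) :
    𝔼 i ∈ s, (if X i ≤ μ - b then w i else 0) ≤ (𝔼 i ∈ s, w i) * (V / (V + b ^ 2)) := by
  have hden : 0 < V + b ^ 2 := by positivity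
  have hmarkov : 𝔼 i ∈ s, (if X i ≤ μ - b then w i else 0) * (V + b ^ 2) ^ 2
      ≤ 𝔼 i ∈ s, w i * (V - b * (X i - μ)) ^ 2 := by
    refine expect_le_expect fun i hi ↦ ?_
    split_ifs with h
    · exact mul_le_mul_of_nonneg_left (pow_le_pow_left₀ hden.le (by nlinarith) 2) (hw i hi)
    · simpa only [zero_mul] using mul_nonneg (hw i hi) (sq_nonneg _)
  have hexpand : 𝔼 i ∈ s, w i * (V - b * (X i - μ)) ^ 2
      = V ^ 2 * 𝔼 i ∈ s, w i - 2 * V * b * 𝔼 i ∈ s, w i * (X i - μ)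
        + b ^ 2 * 𝔼 i ∈ s, w i * (X i - μ) ^ 2 := by
    simp only [mul_expect, ← expect_sub_distrib, ← expect_add_distrib]
    exact expect_congr rfl fun i _ ↦ by ring
  rw [← expect_mul, hexpand, hmean] at hmarkov
  rw [← mul_div_assoc, le_div_iff₀ hden]
  nlinarith [mul_le_mul_of_nonneg_left hvar (sq_nonneg b)]

lemma expect_ite_le_of_mgf_le {m a : ℝ} (hm : 0 < m) (ha : 0 ≤ a)
    (hmgf : ∀ t, 0 ≤ t → 𝔼 i ∈ s, Real.exp (-t * X i) ≤ Real.exp (m * (t ^ 2 / 2 - t))) :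
    𝔼 i ∈ s, (if X i ≤ m - a then X i else 0) ≤ m * Real.exp (-((2 * a + a ^ 2) / (2 * m))) := by
  set t := a / m with ht
  have ht₀ : 0 ≤ t := by positivity
  have ha_eq : a = m * t := by rw [ht]; field_simp
  have hpoint (i : ι) : (if X i ≤ m - a then X i else 0)
      ≤ m * Real.exp (-t + t * (m - a)) * Real.exp (-t * X i) := by
    rw [mul_assoc, ← Real.exp_add]
    split_ifs with h
    · -- The factor `exp (-t)` pays for the size-biased mean being as large as `m + 1`.
      calc X i ≤ m * (-t + 1) := by linarith
        _ ≤ m * Real.exp (-t) := by gcongr; exact Real.add_one_le_exp _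
        _ ≤ _ := by gcongr; nlinarith
    · positivity
  calc 𝔼 i ∈ s, (if X i ≤ m - a then X i else 0)
      ≤ m * Real.exp (-t + t * (m - a)) * 𝔼 i ∈ s, Real.exp (-t * X i) := by
        rw [mul_expect]
        exact expect_le_expect fun i _ ↦ hpoint i
    _ ≤ m * Real.exp (-t + t * (m - a)) * Real.exp (m * (t ^ 2 / 2 - t)) := by
        gcongr
        exact hmgf t ht₀
    _ = m * Real.exp (-((2 * a + a ^ 2) / (2 * m))) := by
        rw [mul_assoc, ← Real.exp_add, ha_eq]
        congr 2
        field_simp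
        ring

lemma sq_div_two_mul_le_of_two_mul_lt_sq {m l b : ℝ} (hm : 0 < m) (hml : m ≤ l) (hlm : l ≤ m + 1)
    (hl : 1 ≤ l) (hb : 0 ≤ b) (hbl : 2 * l < b ^ 2) :
    b ^ 2 / (2 * l) ≤ (2 * (b - (l - m)) + (b - (l - m)) ^ 2) / (2 * m) := by
  obtain ⟨a, rfl⟩ : ∃ a, b = a + (l - m) := ⟨b - (l - m), by ring⟩
  obtain ⟨d, rfl⟩ : ∃ d, l = m + d := ⟨l - m, by ring⟩
  simp only [add_sub_cancel_left, add_sub_cancel_right] at *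
  have hb₁ : 1 < a + d := by nlinarith
  have ha : 0 < a := by linarith
  rw [div_le_div_iff₀ (by positivity) (by positivity)]
  have hgap : m ≤ a ^ 2 + 2 * a := by nlinarith
  have hquad : 0 ≤ d * (a ^ 2 + 2 * a - m * d) := mul_nonneg (by linarith) (by nlinarith)
  have hlin : 0 ≤ a * m * (1 - d) := mul_nonneg (by positivity) (by linarith)
  nlinarith

lemma expect_ite_le_of_sizeBiased_variance_le {m l a b : ℝ} (hX : ∀ i ∈ s, 0 ≤ X i)
    (hm : 0 < m) (hmean : 𝔼 i ∈ s, X i = m) (hsq : 𝔼 i ∈ s, X i ^ 2 = m * l)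
    (hvar : 𝔼 i ∈ s, X i * (X i - a) ^ 2 ≤ m * l) (hml : m ≤ l) (hlm : l ≤ m + 1) (hl : 1 ≤ l)
    (hmgf : ∀ t, 0 ≤ t → 𝔼 i ∈ s, Real.exp (-t * X i) ≤ Real.exp (m * (t ^ 2 / 2 - t)))
    (hb : 0 ≤ b) :
    𝔼 i ∈ s, (if X i ≤ l - b then X i else 0) ≤ m * Real.exp (-(b ^ 2 / (2 * l))) := by
  have hl₀ : 0 < l := by linarith
  obtain hnear | hfar := le_or_gt (b ^ 2) (2 * l)
  · have hcentred : 𝔼 i ∈ s, X i * (X i - l) = 0 := by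
      simp only [mul_sub, expect_sub_distrib, ← expect_mul, ← sq, hmean, hsq, sub_self]
    calc 𝔼 i ∈ s, (if X i ≤ l - b then X i else 0) ≤ m * (l / (l + b ^ 2)) :=
          hmean ▸ expect_ite_le_of_variance_le hX hl₀ hb hcentred
            (hmean.symm ▸ (expect_mul_sub_sq_le hX hcentred a).trans hvar)
      _ = m * (1 + 2 * (b ^ 2 / (2 * l)))⁻¹ := by field_simp
      _ ≤ m * Real.exp (-(b ^ 2 / (2 * l))) := by
          gcongr
          exact inv_one_add_two_mul_le_exp_neg (by positivity)
            ((div_le_one (by positivity)).2 hnear)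
  · have ha : 0 ≤ b - (l - m) := by nlinarith
    calc 𝔼 i ∈ s, (if X i ≤ l - b then X i else 0)
        = 𝔼 i ∈ s, (if X i ≤ m - (b - (l - m)) then X i else 0) := by ring_nf
      _ ≤ m * Real.exp (-((2 * (b - (l - m)) + (b - (l - m)) ^ 2) / (2 * m))) :=
          expect_ite_le_of_mgf_le hm ha hmgf
      _ ≤ m * Real.exp (-(b ^ 2 / (2 * l))) :=
          mul_le_mul_of_nonneg_left (Real.exp_le_exp.2 (neg_le_neg
            (sq_div_two_mul_le_of_two_mul_lt_sq hm hml hlm hl hb hfar))) hm.le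

end Tails

section MissingColours

variable {U C : Type*} [DecidableEq C]

/-- The colour lists obtained from `L` by deleting the colour `c` from each of them. Choosing
uniformly from these lists is the same as choosing from `L` conditionally on `c` being missing. -/
def eraseColour (L : U → Finset C) (c : C) (u : U) : Finset C := (L u).erase c

variable [Fintype U]

/-- The set of colours not used by `ω`. -/
def missingColours [Fintype C] (ω : U → C) : Finset C := (univ.image ω)ᶜ

/-- The probability that the colour `c` is missing from a uniformly random choice of colours from
the lists `L`; it is `0` if some list is empty. -/
noncomputable def missProb (L : U → Finset C) (c : C) : ℝ :=
  ∏ u, (#(eraseColour L c u) : ℝ) / #(L u)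

/-- The expected number of colours missing from a uniformly random choice of colours from the
lists `L`. -/
noncomputable def meanMissing [Fintype C] (L : U → Finset C) : ℝ := ∑ c, missProb L c

@[simp]
lemma mem_missingColours [Fintype C] {ω : U → C} {c : C} :
    c ∈ missingColours ω ↔ ∀ u, ω u ≠ c := by
  simp [missingColours]

lemma missProb_nonneg (L : U → Finset C) (c : C) : 0 ≤ missProb L c :=
  prod_nonneg fun _ _ ↦ by positivity

lemma missProb_le_one (L : U → Finset C) (c : C) : missProb L c ≤ 1 :=
  prod_le_one (fun _ _ ↦ by positivity) fun _ _ ↦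
    div_le_one_of_le₀ (mod_cast card_erase_le) (by positivity)

lemma eraseColour_nonempty_of_missProb_ne_zero {L : U → Finset C} {c : C}
    (h : missProb L c ≠ 0) (u : U) : (eraseColour L c u).Nonempty := by
  have hfactor := prod_ne_zero_iff.1 h u (mem_univ u)
  exact card_ne_zero.1 fun h0 ↦ hfactor (by rw [h0, Nat.cast_zero, zero_div])

lemma missProb_eraseColour_self {L : U → Finset C} {c : C}
    (h : ∀ u, (eraseColour L c u).Nonempty) : missProb (eraseColour L c) c = 1 := by
  refine prod_eq_one fun u _ ↦ ?_
  have hcard : (#(eraseColour L c u) : ℝ) ≠ 0 := mod_cast (h u).card_pos.ne'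
  rw [show eraseColour (eraseColour L c) c u = eraseColour L c u from erase_idem]
  exact div_self hcard

variable [DecidableEq U]

lemma missProb_mul_expect_const (L : U → Finset C) (c : C) (a : ℝ) :
    missProb L c * 𝔼 _ω ∈ piFinset (eraseColour L c), a = missProb L c * a := by
  obtain h0 | hne := eq_or_ne (missProb L c) 0
  · simp [h0]
  · rw [expect_const (piFinset_nonempty.2 (eraseColour_nonempty_of_missProb_ne_zero hne))]

variable [Fintype C]

lemma filter_mem_missingColours (L : U → Finset C) (c : C) :
    {ω ∈ piFinset L | c ∈ missingColours ω} = piFinset (eraseColour L c) := by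
  ext ω
  simp [eraseColour, mem_erase, forall_and, and_comm]

lemma expect_ite_mem_missingColours (L : U → Finset C) (c : C) (F : (U → C) → ℝ) :
    𝔼 ω ∈ piFinset L, (if c ∈ missingColours ω then F ω else 0)
      = missProb L c * 𝔼 ω ∈ piFinset (eraseColour L c), F ω := by
  rw [expect_eq_sum_div_card, expect_eq_sum_div_card, ← sum_filter, filter_mem_missingColours,
    missProb, prod_div_distrib, ← Nat.cast_prod, ← Nat.cast_prod, ← card_piFinset, ← card_piFinset]
  obtain hempty | hne := (piFinset (eraseColour L c)).eq_empty_or_nonempty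
  · simp [hempty]
  · have hcard : (#(piFinset (eraseColour L c)) : ℝ) ≠ 0 := mod_cast hne.card_pos.ne'
    field_simp

lemma expect_card_missingColours_mul (L : U → Finset C) (F : (U → C) → ℝ) :
    𝔼 ω ∈ piFinset L, #(missingColours ω) * F ω
      = ∑ c, missProb L c * 𝔼 ω ∈ piFinset (eraseColour L c), F ω := by
  simp only [← expect_ite_mem_missingColours]
  rw [← expect_sum_comm]
  refine expect_congr rfl fun ω _ ↦ ?_
  rw [sum_ite_mem, univ_inter, sum_const, nsmul_eq_mul]

lemma expect_card_missingColours (L : U → Finset C) :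
    𝔼 ω ∈ piFinset L, (#(missingColours ω) : ℝ) = meanMissing L := by
  simpa only [meanMissing, missProb_mul_expect_const, mul_one] using
    expect_card_missingColours_mul L fun _ ↦ 1

lemma expect_card_missingColours_sq (L : U → Finset C) :
    𝔼 ω ∈ piFinset L, (#(missingColours ω) : ℝ) ^ 2
      = ∑ c, missProb L c * meanMissing (eraseColour L c) := by
  simp only [sq, expect_card_missingColours_mul, expect_card_missingColours]

end MissingColours

section NegativeDependence

variable {U C : Type*} [Fintype U] [DecidableEq U] [DecidableEq C]

-- Couple a choice `ω` from `L` with a choice `ρ` from the smaller lists by letting `ρ` replace `ω`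
-- wherever `ω` uses `c`; exchanging the two at these places is a bijection of the product.
lemma expect_piFinset_le_expect_eraseColour {L : U → Finset C} {c : C} {F : (U → C) → ℝ}
    (hL : ∀ u, (eraseColour L c u).Nonempty)
    (hF : ∀ ω ω', (∀ u, ω u ≠ c → ω' u = ω u) → F ω ≤ F ω') :
    𝔼 ω ∈ piFinset L, F ω ≤ 𝔼 ω ∈ piFinset (eraseColour L c), F ω := by
  have hL' : (piFinset L).Nonempty :=
    piFinset_nonempty.2 fun u ↦ (hL u).mono (erase_subset _ _)
  calc 𝔼 ω ∈ piFinset L, F ω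
      = 𝔼 z ∈ piFinset L ×ˢ piFinset (eraseColour L c), F z.1 := by
        rw [expect_product]
        simp only [expect_const (piFinset_nonempty.2 hL)]
    _ ≤ 𝔼 z ∈ piFinset L ×ˢ piFinset (eraseColour L c),
          F (fun u ↦ if z.1 u = c then z.2 u else z.1 u) :=
        expect_le_expect fun z _ ↦ hF _ _ fun u hu ↦ if_neg hu
    _ = 𝔼 z ∈ piFinset (eraseColour L c) ×ˢ piFinset L, F z.1 := by
        refine expect_nbij'
          (fun z ↦ (fun u ↦ if z.1 u = c then z.2 u else z.1 u,
            fun u ↦ if z.1 u = c then z.1 u else z.2 u))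
          (fun z ↦ (fun u ↦ if z.2 u = c then z.2 u else z.1 u,
            fun u ↦ if z.2 u = c then z.1 u else z.2 u)) ?_ ?_ ?_ ?_ ?_
        all_goals
          simp only [Prod.forall, mem_product, mem_piFinset, eraseColour, mem_erase, Prod.mk.injEq,
            funext_iff]
          grind
    _ = 𝔼 ω ∈ piFinset (eraseColour L c), F ω := by
        rw [expect_product]
        simp only [expect_const hL']

variable [Fintype C]

lemma expect_prod_inter_missingColours_le (L : U → Finset C) {t : C → ℝ} (ht₀ : ∀ c, 0 ≤ t c)
    (ht₁ : ∀ c, t c ≤ 1) (T : Finset C) :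
    𝔼 ω ∈ piFinset L, ∏ c ∈ T ∩ missingColours ω, t c
      ≤ ∏ c ∈ T, (1 - (1 - t c) * missProb L c) := by
  have hbound (c : C) : (1 - t c) * missProb L c ≤ 1 :=
    mul_le_one₀ (by linarith [ht₀ c]) (missProb_nonneg L c) (missProb_le_one L c)
  induction T using Finset.induction_on with
  | empty =>
    obtain h | h := (piFinset L).eq_empty_or_nonempty
    · simp [h]
    · simp [expect_const h]
  | insert c T hc ih =>
    set F : (U → C) → ℝ := fun ω ↦ ∏ d ∈ T ∩ missingColours ω, t d
    have hsplit (ω : U → C) : ∏ d ∈ insert c T ∩ missingColours ω, t d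
        = F ω - (1 - t c) * (if c ∈ missingColours ω then F ω else 0) := by
      split_ifs with h
      · rw [insert_inter_of_mem h, prod_insert (fun hmem ↦ hc (mem_inter.1 hmem).1)]
        ring
      · rw [insert_inter_of_notMem h, mul_zero, sub_zero]
    have hmono (hne : missProb L c ≠ 0) :
        𝔼 ω ∈ piFinset L, F ω ≤ 𝔼 ω ∈ piFinset (eraseColour L c), F ω := by
      refine expect_piFinset_le_expect_eraseColour
        (eraseColour_nonempty_of_missProb_ne_zero hne) fun ω ω' h ↦ ?_
      refine prod_le_prod_of_subset_of_le_one (fun d hd ↦ ?_) (fun d _ ↦ ht₀ d) fun d _ _ ↦ ht₁ d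
      rw [mem_inter, mem_missingColours] at hd ⊢
      refine ⟨hd.1, fun u hu ↦ hd.2 u ?_⟩
      rw [h u (fun h' ↦ hc ((h'.symm.trans hu) ▸ hd.1)), hu]
    have hcond : missProb L c * 𝔼 ω ∈ piFinset L, F ω
        ≤ missProb L c * 𝔼 ω ∈ piFinset (eraseColour L c), F ω := by
      obtain h0 | hne := eq_or_ne (missProb L c) 0
      · simp [h0]
      · exact mul_le_mul_of_nonneg_left (hmono hne) (missProb_nonneg L c)
    rw [prod_insert hc]
    simp only [hsplit, expect_sub_distrib, ← mul_expect, expect_ite_mem_missingColours]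
    nlinarith [mul_le_mul_of_nonneg_left hcond (sub_nonneg.2 (ht₁ c)),
      mul_le_mul_of_nonneg_left ih (sub_nonneg.2 (hbound c))]

lemma expect_exp_neg_mul_card_missingColours_le (L : U → Finset C) {t : ℝ} (ht : 0 ≤ t) :
    𝔼 ω ∈ piFinset L, Real.exp (-t * #(missingColours ω))
      ≤ Real.exp (meanMissing L * (t ^ 2 / 2 - t)) := by
  have hmean : 0 ≤ meanMissing L := sum_nonneg fun c _ ↦ missProb_nonneg L c
  have hexp₁ : Real.exp (-t) ≤ 1 := Real.exp_le_one_iff.2 (neg_nonpos.2 ht)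
  calc 𝔼 ω ∈ piFinset L, Real.exp (-t * #(missingColours ω))
      = 𝔼 ω ∈ piFinset L, ∏ _c ∈ univ ∩ missingColours ω, Real.exp (-t) := by
        simp only [univ_inter, prod_const, ← Real.exp_nat_mul, mul_comm (-t)]
    _ ≤ ∏ c, (1 - (1 - Real.exp (-t)) * missProb L c) :=
        expect_prod_inter_missingColours_le L (fun _ ↦ (Real.exp_pos _).le) (fun _ ↦ hexp₁) univ
    _ ≤ ∏ c, Real.exp (-((1 - Real.exp (-t)) * missProb L c)) := by
        refine prod_le_prod (fun c _ ↦ sub_nonneg.2 ?_) fun c _ ↦ Real.one_sub_le_exp_neg _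
        exact mul_le_one₀ (by linarith [Real.exp_pos (-t)]) (missProb_nonneg L c)
          (missProb_le_one L c)
    _ = Real.exp (-(1 - Real.exp (-t)) * meanMissing L) := by
        simp only [← Real.exp_sum, meanMissing, mul_sum, neg_mul, sum_neg_distrib]
    _ ≤ Real.exp (meanMissing L * (t ^ 2 / 2 - t)) := by
        refine Real.exp_le_exp.2 ?_
        nlinarith [mul_le_mul_of_nonneg_left (one_sub_exp_neg_ge ht) hmean]

end NegativeDependence

section SizeBiasedMoments

variable {U C : Type*} [DecidableEq C]

/-- For distinct colours `c` and `x`, the relative decrease of the probability that a uniformly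
random colour of the list `A` differs from `x` when one conditions on it differing from `c`.
For a one-element list the inverse is `0`. -/
noncomputable def listOverlap (A : Finset C) (c x : C) : ℝ :=
  if c ∈ A ∧ x ∈ A then ((#A : ℝ) - 1)⁻¹ ^ 2 else 0

lemma listOverlap_nonneg (A : Finset C) (c x : C) : 0 ≤ listOverlap A c x := by
  unfold listOverlap
  positivity

lemma listOverlap_comm (A : Finset C) (c x : C) : listOverlap A c x = listOverlap A x c := by
  simp only [listOverlap, and_comm]

lemma listOverlap_le_one (A : Finset C) {c x : C} (hxc : x ≠ c) : listOverlap A c x ≤ 1 := by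
  unfold listOverlap
  split_ifs with h
  · have htwo : (2 : ℝ) ≤ #A := mod_cast one_lt_card.2 ⟨x, h.2, c, h.1, hxc⟩
    exact pow_le_one₀ (inv_nonneg.2 (by linarith)) (inv_le_one_of_one_le₀ (by linarith))
  · exact zero_le_one

lemma sum_erase_listOverlap [Fintype C] (A : Finset C) (c : C) :
    ∑ x ∈ univ.erase c, listOverlap A c x = if c ∈ A then ((#A : ℝ) - 1)⁻¹ else 0 := by
  split_ifs with hc
  · have hinter : univ.erase c ∩ A = A.erase c := by rw [erase_inter, univ_inter]
    simp only [listOverlap, hc, true_and]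
    rw [sum_ite_mem, hinter, sum_const, nsmul_eq_mul, cast_card_erase_of_mem hc, sq, ← mul_assoc]
    simpa only [inv_inv] using inv_mul_mul_self ((#A : ℝ) - 1)⁻¹
  · simp [listOverlap, hc]

lemma card_erase_erase_div_card_erase {A : Finset C} {c x : C} (hxc : x ≠ c)
    (hA : (A.erase c).Nonempty) :
    (#((A.erase c).erase x) : ℝ) / #(A.erase c)
      = #(A.erase x) / #A * (1 - listOverlap A c x) := by
  unfold listOverlap
  have hcard : (#(A.erase c) : ℝ) ≠ 0 := mod_cast hA.card_pos.ne'
  have hcardA : (#A : ℝ) ≠ 0 := mod_cast (hA.mono (erase_subset _ _)).card_pos.ne'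
  by_cases hc : c ∈ A
  · rw [cast_card_erase_of_mem hc] at hcard ⊢
    by_cases hx : x ∈ A
    · rw [cast_card_erase_of_mem (mem_erase.2 ⟨hxc, hx⟩), cast_card_erase_of_mem hc,
        cast_card_erase_of_mem hx, if_pos ⟨hc, hx⟩]
      field_simp
      ring
    · rw [erase_eq_of_notMem (fun h ↦ hx (mem_of_mem_erase h)), erase_eq_of_notMem hx,
        if_neg (fun h ↦ hx h.2), cast_card_erase_of_mem hc]
      field_simp
      ring
  · rw [erase_eq_of_notMem hc, if_neg (fun h ↦ hc h.1), sub_zero, mul_one]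

variable [Fintype U]

/-- For distinct colours `c` and `x`, a bound on the relative decrease of the probability that `x`
is missing when one conditions on `c` being missing. The diagonal value `1` accounts for `c`
itself becoming missing. -/
noncomputable def overlap (L : U → Finset C) (c x : C) : ℝ :=
  if x = c then 1 else ∑ u, listOverlap (L u) c x

lemma overlap_nonneg (L : U → Finset C) (c x : C) : 0 ≤ overlap L c x := by
  unfold overlap
  split_ifs
  · exact zero_le_one
  · exact sum_nonneg fun u _ ↦ listOverlap_nonneg (L u) c x

lemma overlap_comm (L : U → Finset C) (c x : C) : overlap L c x = overlap L x c := by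
  simp only [overlap, eq_comm (a := x), listOverlap_comm _ c]

lemma sum_overlap [Fintype C] (L : U → Finset C) (c : C) :
    ∑ x, overlap L c x = 1 + ∑ u, if c ∈ L u then ((#(L u) : ℝ) - 1)⁻¹ else 0 := by
  have hoff (x : C) (hx : x ∈ univ.erase c) : overlap L c x = ∑ u, listOverlap (L u) c x :=
    if_neg (ne_of_mem_erase hx)
  rw [← add_sum_erase _ _ (mem_univ c), sum_congr rfl hoff, sum_comm, overlap, if_pos rfl]
  simp only [sum_erase_listOverlap]

lemma missProb_mul_sum_overlap_le_one [Fintype C] (L : U → Finset C) (c : C) :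
    missProb L c * ∑ x, overlap L c x ≤ 1 := by
  have hnonneg (u : U) : 0 ≤ if c ∈ L u then ((#(L u) : ℝ) - 1)⁻¹ else 0 := by
    split_ifs with hc
    · exact inv_nonneg.2 (sub_nonneg.2 (mod_cast card_pos.2 ⟨c, hc⟩))
    · exact le_rfl
  rw [sum_overlap]
  refine (mul_le_mul_of_nonneg_left (one_add_sum_le_prod_one_add univ fun u _ ↦ hnonneg u)
    (missProb_nonneg L c)).trans ?_
  rw [missProb, ← prod_mul_distrib]
  refine prod_le_one (fun u _ ↦ mul_nonneg (by positivity) (by linarith [hnonneg u])) fun u _ ↦ ?_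
  by_cases hc : c ∈ L u
  · have hcard : (#(L u) : ℝ) ≠ 0 := mod_cast (card_pos.2 ⟨c, hc⟩).ne'
    rw [if_pos hc, eraseColour, cast_card_erase_of_mem hc]
    obtain h1 | h1 := eq_or_ne ((#(L u) : ℝ) - 1) 0
    · simp [h1]
    · exact (by field_simp; ring : _ = (1 : ℝ)).le
  · rw [if_neg hc, eraseColour, erase_eq_of_notMem hc, add_zero, mul_one]
    exact div_self_le_one _

variable {L : U → Finset C} {c : C}

lemma missProb_eraseColour {x : C} (hxc : x ≠ c) (h : ∀ u, (eraseColour L c u).Nonempty) :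
    missProb (eraseColour L c) x = missProb L x * ∏ u, (1 - listOverlap (L u) c x) := by
  rw [missProb, missProb, ← prod_mul_distrib]
  exact prod_congr rfl fun u _ ↦ card_erase_erase_div_card_erase hxc (h u)

lemma missProb_eraseColour_le {x : C} (hxc : x ≠ c) (h : ∀ u, (eraseColour L c u).Nonempty) :
    missProb (eraseColour L c) x ≤ missProb L x := by
  rw [missProb_eraseColour hxc h]
  refine mul_le_of_le_one_right (missProb_nonneg L x) (prod_le_one (fun u _ ↦ ?_) fun u _ ↦ ?_)
  · exact sub_nonneg.2 (listOverlap_le_one (L u) hxc)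
  · exact sub_le_self _ (listOverlap_nonneg (L u) c x)

lemma missProb_sub_missProb_eraseColour_le {x : C} (hxc : x ≠ c)
    (h : ∀ u, (eraseColour L c u).Nonempty) :
    missProb L x - missProb (eraseColour L c) x ≤ overlap L c x * missProb L x := by
  have hprod := one_sub_sum_le_prod_one_sub univ
    (fun u _ ↦ listOverlap_nonneg (L u) c x) fun u _ ↦ listOverlap_le_one (L u) hxc
  rw [missProb_eraseColour hxc h, overlap, if_neg hxc]
  nlinarith [mul_le_mul_of_nonneg_left hprod (missProb_nonneg L x)]

variable [Fintype C]

lemma meanMissing_eraseColour (h : ∀ u, (eraseColour L c u).Nonempty) :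
    meanMissing (eraseColour L c) = 1 + ∑ x ∈ univ.erase c, missProb (eraseColour L c) x := by
  rw [meanMissing, ← add_sum_erase _ _ (mem_univ c), missProb_eraseColour_self h]

lemma meanMissing_eraseColour_le (h : ∀ u, (eraseColour L c u).Nonempty) :
    meanMissing (eraseColour L c) ≤ meanMissing L + 1 - missProb L c := by
  have hsum := sum_le_sum fun x hx ↦ missProb_eraseColour_le (ne_of_mem_erase (s := univ) hx) h
  rw [meanMissing_eraseColour h, meanMissing, ← add_sum_erase _ _ (mem_univ c)]
  linarith

lemma meanMissing_add_one_sub_le (h : ∀ u, (eraseColour L c u).Nonempty) :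
    meanMissing L + 1 - meanMissing (eraseColour L c) ≤ ∑ x, overlap L c x * missProb L x := by
  have hsum := sum_le_sum fun x hx ↦
    missProb_sub_missProb_eraseColour_le (ne_of_mem_erase (s := univ) hx) h
  rw [sum_sub_distrib] at hsum
  rw [meanMissing_eraseColour h, meanMissing, ← add_sum_erase _ _ (mem_univ c),
    ← add_sum_erase univ (fun x ↦ overlap L c x * _) (mem_univ c), overlap, if_pos rfl]
  linarith

lemma sum_missProb_mul_sq_le (L : U → Finset C) :
    ∑ c, missProb L c * (meanMissing L + 1 - meanMissing (eraseColour L c)) ^ 2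
      ≤ meanMissing L := by
  refine le_trans (sum_le_sum fun c _ ↦ ?_) (sum_mul_sq_sum_mul_le (missProb_nonneg L)
    (overlap_nonneg L) (overlap_comm L) (missProb_mul_sum_overlap_le_one L))
  obtain h0 | hne := eq_or_ne (missProb L c) 0
  · simp [h0]
  · have h := eraseColour_nonempty_of_missProb_ne_zero hne
    refine mul_le_mul_of_nonneg_left (pow_le_pow_left₀ ?_ (meanMissing_add_one_sub_le h) 2)
      (missProb_nonneg L c)
    linarith [meanMissing_eraseColour_le h, missProb_nonneg L c]

variable [DecidableEq U]

lemma expect_card_missingColours_sq_le (L : U → Finset C) :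
    𝔼 ω ∈ piFinset L, (#(missingColours ω) : ℝ) ^ 2
      ≤ meanMissing L ^ 2 + ∑ c, missProb L c * (1 - missProb L c) := by
  rw [expect_card_missingColours_sq, sq, meanMissing, sum_mul, ← meanMissing, ← sum_add_distrib]
  refine sum_le_sum fun c _ ↦ ?_
  rw [← mul_add, ← add_sub_assoc]
  obtain h0 | hne := eq_or_ne (missProb L c) 0
  · simp [h0]
  · exact mul_le_mul_of_nonneg_left
      (meanMissing_eraseColour_le (eraseColour_nonempty_of_missProb_ne_zero hne))
      (missProb_nonneg L c)

lemma expect_eraseColour_card_missingColours_sq_le (h : ∀ u, (eraseColour L c u).Nonempty) :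
    𝔼 ω ∈ piFinset (eraseColour L c), (#(missingColours ω) : ℝ) ^ 2
      ≤ meanMissing (eraseColour L c) ^ 2 + meanMissing (eraseColour L c) - 1 := by
  refine (expect_card_missingColours_sq_le _).trans ?_
  rw [add_sub_assoc, meanMissing_eraseColour h, add_sub_cancel_left,
    ← add_sum_erase _ _ (mem_univ c), missProb_eraseColour_self h, sub_self, mul_zero, zero_add]
  gcongr with x
  exact mul_le_of_le_one_right (missProb_nonneg _ x) (sub_le_self _ (missProb_nonneg _ x))

lemma expect_card_missingColours_mul_sq_sub_le (L : U → Finset C) :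
    𝔼 ω ∈ piFinset L, #(missingColours ω) * ((#(missingColours ω) : ℝ) - (meanMissing L + 1)) ^ 2
      ≤ 𝔼 ω ∈ piFinset L, (#(missingColours ω) : ℝ) ^ 2 := by
  have hcond (c : C) : missProb L c * 𝔼 ω ∈ piFinset (eraseColour L c),
        ((#(missingColours ω) : ℝ) - (meanMissing L + 1)) ^ 2
      ≤ missProb L c * meanMissing (eraseColour L c) - missProb L c
        + missProb L c * (meanMissing L + 1 - meanMissing (eraseColour L c)) ^ 2 := by
    obtain h0 | hne := eq_or_ne (missProb L c) 0
    · simp [h0]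
    have h := eraseColour_nonempty_of_missProb_ne_zero hne
    rw [expect_sub_sq (piFinset_nonempty.2 h), expect_card_missingColours]
    nlinarith [mul_le_mul_of_nonneg_left (expect_eraseColour_card_missingColours_sq_le h)
      (missProb_nonneg L c)]
  rw [expect_card_missingColours_mul, expect_card_missingColours_sq]
  refine (sum_le_sum fun c _ ↦ hcond c).trans ?_
  rw [sum_add_distrib, sum_sub_distrib, ← meanMissing]
  linarith [sum_missProb_mul_sq_le L]

lemma expect_ite_card_missingColours_le (hm : 0 < meanMissing L) {l δ : ℝ} (hδ : 0 ≤ δ)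
    (hl : 𝔼 ω ∈ piFinset L, (#(missingColours ω) : ℝ) ^ 2 = meanMissing L * l) :
    𝔼 ω ∈ piFinset L,
        (if (#(missingColours ω) : ℝ) ≤ (1 - δ) * l then (#(missingColours ω) : ℝ) else 0)
      ≤ meanMissing L * Real.exp (-(δ ^ 2 * l) / 2) := by
  have hmean := expect_card_missingColours L
  have hne : (piFinset L).Nonempty :=
    nonempty_iff_ne_empty.2 fun h ↦ hm.ne' (by rw [← hmean, h, expect_empty])
  have hml : meanMissing L ≤ l := by
    have hvariance : 0 ≤ 𝔼 ω ∈ piFinset L, ((#(missingColours ω) : ℝ) - meanMissing L) ^ 2 :=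
      expect_nonneg fun ω _ ↦ sq_nonneg _
    rw [expect_sub_sq hne, hmean, hl] at hvariance
    nlinarith
  have hlm : l ≤ meanMissing L + 1 := by
    have hsq := expect_card_missingColours_sq_le L
    have hsum : ∑ c, missProb L c * (1 - missProb L c) ≤ meanMissing L := sum_le_sum fun c _ ↦
      mul_le_of_le_one_right (missProb_nonneg L c) (sub_le_self _ (missProb_nonneg L c))
    rw [hl] at hsq
    nlinarith
  have hl₁ : 1 ≤ l := by
    have hle : meanMissing L ≤ meanMissing L * l := by
      rw [← hl, ← hmean]
      exact expect_le_expect fun ω _ ↦ mod_cast Nat.le_self_pow two_ne_zero _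
    nlinarith
  have hvar : 𝔼 ω ∈ piFinset L,
      #(missingColours ω) * ((#(missingColours ω) : ℝ) - (meanMissing L + 1)) ^ 2
        ≤ meanMissing L * l :=
    (expect_card_missingColours_mul_sq_sub_le L).trans_eq hl
  have htail := expect_ite_le_of_sizeBiased_variance_le (fun ω _ ↦ by positivity) hm hmean hl hvar
    hml hlm hl₁ (fun t ht ↦ expect_exp_neg_mul_card_missingColours_le L ht)
    (mul_nonneg hδ (zero_le_one.trans hl₁))
  convert htail using 3
  · rw [sub_mul, one_mul]
  · field_simp

end SizeBiasedMoments

section Extensions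

lemma not_adj_of_isIndepSet_neighborSet {V : Type*} {G : SimpleGraph V} {u v w : V}
    (hv : G.IsIndepSet (G.neighborSet v)) (hu : G.Adj u v) (huw : G.Adj u w) : ¬ G.Adj w v :=
  fun hw ↦ hv hu.symm hw.symm huw.ne huw

variable {V C : Type*} [Fintype V] [DecidableEq V] [Fintype C] [DecidableEq C]
  (G : SimpleGraph V) [DecidableRel G.Adj] (v : V) (σ₀ : V → C)

/-- The proper colourings of `G` that agree with `σ₀` outside the closed neighbourhood of `v`. -/
def properExtensions : Finset (V → C) :=
  {τ | (∀ u w, G.Adj u w → τ u ≠ τ w) ∧ ∀ u, u ∉ insert v (G.neighborFinset v) → τ u = σ₀ u}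

/-- The colours that `σ₀` leaves available at a neighbour `u` of `v`. -/
def availableColours (u : {u // G.Adj u v}) : Finset C :=
  {c | ∀ w, G.Adj u w → w ≠ v → σ₀ w ≠ c}

/-- The colouring equal to `c` at `v`, to `ω` on the neighbours of `v`, and to `σ₀` elsewhere. -/
def glueColouring (ω : {u // G.Adj u v} → C) (c : C) (u : V) : C :=
  if u = v then c else if h : G.Adj u v then ω ⟨u, h⟩ else σ₀ u

variable {G v σ₀}

lemma mem_properExtensions {τ : V → C} :
    τ ∈ properExtensions G v σ₀ ↔ (∀ u w, G.Adj u w → τ u ≠ τ w) ∧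
      ∀ u, u ≠ v → ¬ G.Adj u v → τ u = σ₀ u := by
  simp [properExtensions, G.adj_comm v]

lemma mem_availableColours {u : {u // G.Adj u v}} {c : C} :
    c ∈ availableColours G v σ₀ u ↔ ∀ w, G.Adj u w → w ≠ v → σ₀ w ≠ c := by
  simp [availableColours]

lemma restrict_mem_piFinset_availableColours (hv : G.IsIndepSet (G.neighborSet v)) {τ : V → C}
    (hτ : τ ∈ properExtensions G v σ₀) :
    (fun u : {u // G.Adj u v} ↦ τ u) ∈ piFinset (availableColours G v σ₀) := by
  rw [mem_properExtensions] at hτ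
  refine mem_piFinset.2 fun u ↦ mem_availableColours.2 fun w huw hwv ↦ ?_
  rw [← hτ.2 w hwv (not_adj_of_isIndepSet_neighborSet hv u.2 huw)]
  exact hτ.1 w u huw.symm

lemma glueColouring_mem_properExtensions (hv : G.IsIndepSet (G.neighborSet v))
    (hσ₀ : (properExtensions G v σ₀).Nonempty) {ω : {u // G.Adj u v} → C} {c : C}
    (hω : ω ∈ piFinset (availableColours G v σ₀)) (hc : c ∈ missingColours ω) :
    glueColouring G v σ₀ ω c ∈ properExtensions G v σ₀ := by
  obtain ⟨τ, hτ⟩ := hσ₀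
  rw [mem_properExtensions] at hτ ⊢
  rw [mem_missingColours] at hc
  have hω' (u : {u // G.Adj u v}) := mem_availableColours.1 (mem_piFinset.1 hω u)
  refine ⟨fun u w huw ↦ ?_, fun u huv hu ↦ by rw [glueColouring, if_neg huv, dif_neg hu]⟩
  unfold glueColouring
  split_ifs with huv hwv hw hu hwv hw hwv hw
  · exact absurd (huv.trans hwv.symm) huw.ne
  · exact (hc ⟨w, hw⟩).symm
  · exact absurd (huv ▸ huw.symm) hw
  · exact hc ⟨u, hu⟩
  · exact absurd hw (not_adj_of_isIndepSet_neighborSet hv hu huw)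
  · exact (hω' ⟨u, hu⟩ w huw hwv).symm
  · exact absurd (hwv ▸ huw) hu
  · exact hω' ⟨w, hw⟩ u huw.symm huv
  · rw [← hτ.2 u huv hu, ← hτ.2 w hwv hw]
    exact hτ.1 u w huw

lemma sum_properExtensions (hv : G.IsIndepSet (G.neighborSet v))
    (hσ₀ : (properExtensions G v σ₀).Nonempty) (f : ({u // G.Adj u v} → C) → ℝ) :
    ∑ τ ∈ properExtensions G v σ₀, f (fun u ↦ τ u)
      = ∑ ω ∈ piFinset (availableColours G v σ₀), #(missingColours ω) * f ω := by
  simp only [← nsmul_eq_mul, ← sum_const]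
  rw [sum_sigma']
  refine sum_bij' (fun τ _ ↦ ⟨fun u ↦ τ u, τ v⟩) (fun z _ ↦ glueColouring G v σ₀ z.1 z.2)
    (fun τ hτ ↦ ?_) (fun z hz ↦ ?_) (fun τ hτ ↦ ?_) (fun z _ ↦ ?_) fun τ _ ↦ rfl
  · exact mem_sigma.2 ⟨restrict_mem_piFinset_availableColours hv hτ,
      mem_missingColours.2 fun u ↦ (mem_properExtensions.1 hτ).1 u v u.2⟩
  · exact glueColouring_mem_properExtensions hv hσ₀ (mem_sigma.1 hz).1 (mem_sigma.1 hz).2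
  · funext u
    simp only [glueColouring]
    split_ifs with huv hu
    · rw [huv]
    · rfl
    · exact ((mem_properExtensions.1 hτ).2 u huv hu).symm
  · refine Sigma.ext (funext fun u ↦ ?_) (heq_of_eq (if_pos rfl))
    simp only [glueColouring, if_neg u.2.ne, dif_pos u.2]

lemma meanMissing_availableColours_pos (hv : G.IsIndepSet (G.neighborSet v))
    (hσ₀ : (properExtensions G v σ₀).Nonempty) : 0 < meanMissing (availableColours G v σ₀) := by
  obtain ⟨τ, hτ⟩ := hσ₀
  rw [← expect_card_missingColours]
  exact expect_pos' (fun ω _ ↦ Nat.cast_nonneg _)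
    ⟨_, restrict_mem_piFinset_availableColours hv hτ, Nat.cast_pos.2 <| card_pos.2
      ⟨τ v, mem_missingColours.2 fun u ↦ (mem_properExtensions.1 hτ).1 u v u.2⟩⟩

lemma expect_properExtensions (hv : G.IsIndepSet (G.neighborSet v))
    (hσ₀ : (properExtensions G v σ₀).Nonempty) (f : ({u // G.Adj u v} → C) → ℝ) :
    𝔼 τ ∈ properExtensions G v σ₀, f (fun u ↦ τ u)
      = (𝔼 ω ∈ piFinset (availableColours G v σ₀), #(missingColours ω) * f ω)
        / meanMissing (availableColours G v σ₀) := by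
  have hcard : (#(properExtensions G v σ₀) : ℝ)
      = ∑ ω ∈ piFinset (availableColours G v σ₀), (#(missingColours ω) : ℝ) := by
    simpa using sum_properExtensions hv hσ₀ fun _ ↦ 1
  have hne : (piFinset (availableColours G v σ₀)).Nonempty :=
    hσ₀.elim fun τ hτ ↦ ⟨_, restrict_mem_piFinset_availableColours hv hτ⟩
  rw [← expect_card_missingColours, expect_eq_sum_div_card, expect_eq_sum_div_card,
    expect_eq_sum_div_card, div_div_div_cancel_right₀ (mod_cast hne.card_pos.ne'), hcard,
    sum_properExtensions hv hσ₀]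

end Extensions

theorem stmt_12_general {V C : Type*} [Fintype V] [DecidableEq V] [Fintype C] [DecidableEq C]
    (G : SimpleGraph V) [DecidableRel G.Adj] (v : V) (hv : G.IsIndepSet (G.neighborSet v))
    (σ₀ : V → C) (Ext : Finset (V → C))
    (hExt : Ext = univ.filter (fun τ : V → C =>
      (∀ u w : V, G.Adj u w → τ u ≠ τ w) ∧
        ∀ u : V, u ∉ insert v (G.neighborFinset v) → τ u = σ₀ u))
    (hne : Ext.Nonempty) (ℓ : ℝ)
    (hℓ : ℓ = (∑ τ ∈ Ext, (#{c | ∀ u, G.Adj u v → τ u ≠ c} : ℝ)) / #Ext)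
    (δ : ℝ) (hδ : 0 ≤ δ) :
    (#{τ ∈ Ext | (#{c | ∀ u, G.Adj u v → τ u ≠ c} : ℝ) ≤ (1 - δ) * ℓ} : ℝ) / #Ext
      ≤ Real.exp (-(δ ^ 2 * ℓ) / 2) := by
  obtain rfl : Ext = properExtensions G v σ₀ := hExt
  have hX (τ : V → C) : ({c | ∀ u, G.Adj u v → τ u ≠ c} : Finset C)
      = missingColours fun u : {u // G.Adj u v} ↦ τ u := by
    ext c
    simp
  have hm := meanMissing_availableColours_pos hv hne
  simp only [hX] at hℓ ⊢
  rw [← expect_eq_sum_div_card, expect_properExtensions hv hne fun ω ↦ #(missingColours ω),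
    eq_div_iff hm.ne'] at hℓ
  rw [← sum_boole, ← expect_eq_sum_div_card, expect_properExtensions hv hne fun ω ↦
    if (#(missingColours ω) : ℝ) ≤ (1 - δ) * ℓ then 1 else 0, div_le_iff₀' hm]
  simp only [mul_ite, mul_one, mul_zero]
  exact expect_ite_card_missingColours_le hm hδ (by simpa only [sq, mul_comm ℓ] using hℓ.symm)

theorem stmt_12 (V : Type) [Fintype V] [DecidableEq V] (G : SimpleGraph V)
    [DecidableRel G.Adj] (htf : G.CliqueFree 3) (v : V) (k : ℕ)
    (σ₀ : V → Fin k)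
    (Ext : Finset (V → Fin k))
    (hExt : Ext = Finset.univ.filter (fun τ : V → Fin k =>
      (∀ u w : V, G.Adj u w → τ u ≠ τ w) ∧
        ∀ u : V, u ∉ insert v (G.neighborFinset v) → τ u = σ₀ u))
    (hne : Ext.Nonempty)
    (ℓ : ℝ)
    (hℓ : ℓ = (∑ τ ∈ Ext, ((Finset.univ.filter
        (fun c : Fin k => ∀ u : V, G.Adj u v → τ u ≠ c)).card : ℝ)) / Ext.card)
    (δ : ℝ) (hδ0 : 0 < δ) (hδ1 : δ < 1) :
    ((Ext.filter (fun τ => ((Finset.univ.filter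
          (fun c : Fin k => ∀ u : V, G.Adj u v → τ u ≠ c)).card : ℝ) ≤
            (1 - δ) * ℓ)).card : ℝ) / Ext.card ≤
      Real.exp (-(δ ^ 2 * ℓ) / 2) :=
  stmt_12_general G v (G.isIndepSet_neighborSet_of_triangleFree htf v) σ₀ Ext hExt hne ℓ hℓ δ hδ0.le
end
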